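/- arXiv:2605.17136 — 5 statements merged into one kernel-verified Lean document; each statement's English description precedes it below -/
import Mathlib

section
/- Let n ≥ 3. There exist ε₀ > 0 and K > 0 (depending only on n) such that the following holds for every p and every 0 ≤ ε < ε₀: if f_1,…,f_n : [n]^p → [n] are an ε-approximate polymorphism of Perm_n with respect to the uniform distribution, then one of the following cases holds: (i) there exist k ∈ [p] and a permutation π of [n] such that for all i ∈ [n], Pr_{x uniform on [n]^p}[f_i(x) ≠ π(x_k)] ≤ K·ε^{1/4}; or (ii) for each j ∈ [n] there exists i ∈ [n] such that Pr_{x uniform on [n]^p}[f_i(x) ≠ j] ≤ K·ε^{1/4}. -/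
/-- Probability of an event under the uniform distribution on a finite type. -/
noncomputable def unifPr {α : Type*} [Fintype α] (P : α → Prop) : ℝ :=
  (Nat.card {a : α // P a} : ℝ) / Fintype.card α

noncomputable section

open Finset
open scoped BigOperators

/-- average -/
def av {α : Type*} [Fintype α] (g : α → ℝ) : ℝ := (∑ x, g x) / Fintype.card α

open Classical in
lemma unifPr_eq {α : Type*} [Fintype α] (P : α → Prop) :
    unifPr P = av (fun x => if P x then (1:ℝ) else 0) := by
  unfold unifPr av
  congr 1
  rw [Nat.card_eq_fintype_card, Fintype.card_subtype]
  simp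

lemma av_mono {α : Type*} [Fintype α] {g h : α → ℝ} (H : ∀ x, g x ≤ h x) : av g ≤ av h := by
  unfold av
  gcongr with x
  exact H x

lemma av_nonneg {α : Type*} [Fintype α] {g : α → ℝ} (H : ∀ x, 0 ≤ g x) : 0 ≤ av g := by
  unfold av
  exact div_nonneg (Finset.sum_nonneg fun x _ => H x) (by positivity)

lemma av_add {α : Type*} [Fintype α] (g h : α → ℝ) :
    av (fun x => g x + h x) = av g + av h := by
  unfold av; rw [Finset.sum_add_distrib, add_div]

lemma av_sub {α : Type*} [Fintype α] (g h : α → ℝ) :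
    av (fun x => g x - h x) = av g - av h := by
  unfold av; rw [Finset.sum_sub_distrib, sub_div]

lemma av_mul_left {α : Type*} [Fintype α] (c : ℝ) (g : α → ℝ) :
    av (fun x => c * g x) = c * av g := by
  unfold av; rw [← Finset.mul_sum, mul_div_assoc]

lemma av_mul_right {α : Type*} [Fintype α] (c : ℝ) (g : α → ℝ) :
    av (fun x => g x * c) = av g * c := by
  simp_rw [mul_comm _ c]; rw [av_mul_left]

lemma av_sum {α β : Type*} [Fintype α] (s : Finset β) (g : β → α → ℝ) :
    av (fun x => ∑ b ∈ s, g b x) = ∑ b ∈ s, av (g b) := by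
  unfold av; rw [Finset.sum_comm, Finset.sum_div]

lemma av_const {α : Type*} [Fintype α] [Nonempty α] (c : ℝ) :
    av (fun _ : α => c) = c := by
  unfold av; simp

lemma av_comm {α β : Type*} [Fintype α] [Fintype β] (g : α → β → ℝ) :
    av (fun x => av (fun y => g x y)) = av (fun y => av (fun x => g x y)) := by
  unfold av
  simp_rw [← Finset.sum_div]
  rw [Finset.sum_comm, div_div, div_div, mul_comm]

lemma av_equiv {α β : Type*} [Fintype α] [Fintype β] (e : α ≃ β) (g : β → ℝ) :
    av (fun x => g (e x)) = av g := by
  unfold av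
  rw [Equiv.sum_comp e, Fintype.card_congr e]

lemma av_prod {α β : Type*} [Fintype α] [Fintype β] (g : α × β → ℝ) :
    av g = av (fun x => av (fun y => g (x, y))) := by
  unfold av
  simp_rw [← Finset.sum_div]
  rw [Fintype.sum_prod_type, Fintype.card_prod, div_div]
  push_cast
  rw [mul_comm]

lemma exists_le_av {α : Type*} [Fintype α] [Nonempty α] (g : α → ℝ) : ∃ x, g x ≤ av g := by
  by_contra h
  push Not at h
  have : ∑ _x : α, av g < ∑ x, g x :=
    Finset.sum_lt_sum_of_nonempty univ_nonempty (fun x _ => h x)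
  rw [Finset.sum_const, nsmul_eq_mul, card_univ] at this
  unfold av at this
  have h0 : (Fintype.card α : ℝ) ≠ 0 := by
    have := Fintype.card_ne_zero (α := α)
    exact_mod_cast this
  rw [mul_div_cancel₀ _ h0] at this
  exact lt_irrefl _ this

/-- push forward -/
lemma transferG {ι Z Y : Type*} [Fintype ι] [DecidableEq ι] [Fintype Z] [Fintype Y] [DecidableEq Y]
    (a : ι → Z → Y) (w : ι → Y → ℝ)
    (hw : ∀ k y, av (fun z : Z => if a k z = y then (1:ℝ) else 0) = w k y)
    (Φ : (ι → Y) → ℝ) :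
    av (fun z : ι → Z => Φ (fun k => a k (z k))) = ∑ y : ι → Y, (∏ k, w k (y k)) * Φ y := by
  have h1 : ∀ y : ι → Y, ∏ k, w k (y k)
      = av (fun z : ι → Z => if (fun k => a k (z k)) = y then (1:ℝ) else 0) := by
    intro y
    simp_rw [← hw]
    unfold av
    rw [Finset.prod_div_distrib, Finset.prod_univ_sum]
    congr 1
    · rw [Fintype.piFinset_univ]
      refine Finset.sum_congr rfl fun z _ => ?_
      rw [Finset.prod_ite_zero]
      simp [funext_iff]
    · simp
  simp_rw [h1, ← av_mul_right, ← av_sum]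
  congr 1
  ext z
  simp

lemma transferG2 {ι Z Y : Type*} [Fintype ι] [DecidableEq ι] [Fintype Z] [Fintype Y] [DecidableEq Y]
    (a b : ι → Z → Y) (w : ι → Y → Y → ℝ)
    (hw : ∀ k y y', av (fun z : Z => if a k z = y ∧ b k z = y' then (1:ℝ) else 0) = w k y y')
    (φ ψ : (ι → Y) → ℝ) :
    av (fun z : ι → Z => φ (fun k => a k (z k)) * ψ (fun k => b k (z k)))
      = ∑ x : ι → Y, ∑ y : ι → Y, (∏ k, w k (x k) (y k)) * (φ x * ψ y) := by
  have := transferG (fun k z => (a k z, b k z)) (fun k y => w k y.1 y.2)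
    (by intro k y; rw [← hw]; simp [Prod.ext_iff])
    (fun y => φ (fun k => (y k).1) * ψ (fun k => (y k).2))
  rw [this, ← Fintype.sum_prod_type']
  exact Equiv.sum_comp (Equiv.arrowProdEquivProdArrow ι (fun _ => Y) (fun _ => Y))
    (fun q => (∏ k, w k (q.1 k) (q.2 k)) * (φ q.1 * ψ q.2))

lemma exists_perm2 {n : ℕ} {i i' a b : Fin n} (h : i ≠ i') (hab : a ≠ b) :
    ∃ τ : Equiv.Perm (Fin n), τ i = a ∧ τ i' = b := by
  have := Equiv.Perm.isMultiplyPretransitive (Fin n) 2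
  obtain ⟨g, hg⟩ := MulAction.is_two_pretransitive_iff.mp this h hab
  exact ⟨g, hg⟩

lemma perm_count2 {n : ℕ} {i i' a b c d : Fin n} (hab : a ≠ b) (hcd : c ≠ d) :
    (∑ σ : Equiv.Perm (Fin n), if σ i = a ∧ σ i' = b then (1:ℝ) else 0)
     = ∑ σ : Equiv.Perm (Fin n), if σ i = c ∧ σ i' = d then (1:ℝ) else 0 := by
  obtain ⟨τ, h1, h2⟩ := exists_perm2 hab hcd
  rw [← Equiv.sum_comp (Equiv.mulLeft τ) (fun σ => if σ i = c ∧ σ i' = d then (1:ℝ) else 0)]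
  refine Finset.sum_congr rfl fun σ _ => ?_
  simp [← h1, ← h2]

lemma perm_w2 {n : ℕ} (hn : 3 ≤ n) {i i' : Fin n} (h : i ≠ i') (a b : Fin n) :
    av (fun σ : Equiv.Perm (Fin n) => if σ i = a ∧ σ i' = b then (1:ℝ) else 0)
      = (1 + (-(1 / ((n:ℝ) - 1))) * ((if a = b then (n:ℝ) else 0) - 1)) / (n:ℝ) ^ 2 := by
  have hn' : (3:ℝ) ≤ n := by exact_mod_cast hn
  by_cases hab : a = b
  · subst hab
    have : ∀ σ : Equiv.Perm (Fin n), ¬ (σ i = a ∧ σ i' = a) := by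
      rintro σ ⟨h1, h2⟩
      exact h (σ.injective (h1.trans h2.symm))
    simp only [this, if_false, if_true]
    unfold av
    have : (n:ℝ) - 1 ≠ 0 := by linarith
    field_simp
    simp
  · set c := ∑ σ : Equiv.Perm (Fin n), if σ i = a ∧ σ i' = b then (1:ℝ) else 0 with hc
    have key : ∑ x : Fin n, ∑ y : Fin n,
        (∑ σ : Equiv.Perm (Fin n), if σ i = x ∧ σ i' = y then (1:ℝ) else 0)
        = Fintype.card (Equiv.Perm (Fin n)) := by
      have : ∀ x : Fin n, ∑ y : Fin n,
          (∑ σ : Equiv.Perm (Fin n), if σ i = x ∧ σ i' = y then (1:ℝ) else 0)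
          = ∑ σ : Equiv.Perm (Fin n), if σ i = x then (1:ℝ) else 0 := by
        intro x
        rw [Finset.sum_comm]
        refine Finset.sum_congr rfl fun σ _ => ?_
        simp [ite_and]
      simp_rw [this]
      rw [Finset.sum_comm]
      simp
    have key2 : ∀ x y : Fin n,
        (∑ σ : Equiv.Perm (Fin n), if σ i = x ∧ σ i' = y then (1:ℝ) else 0)
        = c - if x = y then c else 0 := by
      intro x y
      split_ifs with hxy
      · subst hxy
        have : ∀ σ : Equiv.Perm (Fin n), ¬ (σ i = x ∧ σ i' = x) := by
          rintro σ ⟨h1, h2⟩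
          exact h (σ.injective (h1.trans h2.symm))
        simp [this]
      · rw [hc, sub_zero]; exact perm_count2 hxy hab
    simp_rw [key2] at key
    simp at key
    unfold av
    rw [← hc, if_neg hab]
    have h0 : (Fintype.card (Equiv.Perm (Fin n)) : ℝ) ≠ 0 := by
      exact_mod_cast Fintype.card_ne_zero
    have h1 : (n:ℝ) - 1 ≠ 0 := by linarith
    rw [div_eq_div_iff h0 (by positivity)]
    rw [← key]
    field_simp
    ring

lemma perm_w1 {n : ℕ} (hn : 3 ≤ n) (i : Fin n) (a : Fin n) :
    av (fun σ : Equiv.Perm (Fin n) => if σ i = a then (1:ℝ) else 0) = 1 / n := by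
  have hn' : (3:ℝ) ≤ n := by exact_mod_cast hn
  obtain ⟨i', hi⟩ : ∃ i' : Fin n, i ≠ i' := by
    have : Nontrivial (Fin n) := Fin.nontrivial_iff_two_le.mpr (by omega)
    obtain ⟨i', hi⟩ := exists_ne i
    exact ⟨i', hi.symm⟩
  have : av (fun σ : Equiv.Perm (Fin n) => if σ i = a then (1:ℝ) else 0)
     = ∑ b, av (fun σ : Equiv.Perm (Fin n) => if σ i = a ∧ σ i' = b then (1:ℝ) else 0) := by
    rw [← av_sum]
    congr 1; ext σ
    simp [ite_and]
  rw [this]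
  simp_rw [perm_w2 hn hi]
  have h1 : (n:ℝ) - 1 ≠ 0 := by linarith
  rw [← Finset.sum_div, Finset.sum_add_distrib, ← Finset.mul_sum, Finset.sum_sub_distrib]
  simp
  field_simp

/-- frame -/
def fe (n : ℕ) : Option (Fin n) → Fin n → ℝ
  | none, _ => 1
  | some c, a => (if c = a then √(n:ℝ) else 0) - 1 / √(n:ℝ)

def rho {n : ℕ} (r : ℝ) : Option (Fin n) → ℝ
  | none => 1
  | some _ => r

lemma frame {n : ℕ} (hn : 0 < n) (r : ℝ) (a b : Fin n) :
    ∑ c, rho r c * (fe n c a * fe n c b) = 1 + r * ((if a = b then (n:ℝ) else 0) - 1) := by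
  have hn' : (0:ℝ) < n := by exact_mod_cast hn
  have hs : √(n:ℝ) ≠ 0 := by positivity
  rw [Fintype.sum_option]
  simp only [rho, fe]
  rw [← Finset.mul_sum]
  have : ∀ c : Fin n, ((if c = a then √(n:ℝ) else 0) - 1 / √(n:ℝ)) * ((if c = b then √(n:ℝ) else 0) - 1 / √(n:ℝ))
     = (if c = a then (if a = b then (n:ℝ) else 0) else 0) - (if c = a then 1 else 0)
        - (if c = b then 1 else 0) + 1 / n := by
    intro c
    have h2 : √(n:ℝ) * √(n:ℝ) = n := Real.mul_self_sqrt hn'.le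
    have h3 : 1 / √(n:ℝ) * (1 / √(n:ℝ)) = 1 / n := by
      rw [div_mul_div_comm, h2, one_mul]
    have h4 : √(n:ℝ) * (1 / √(n:ℝ)) = 1 := by field_simp
    by_cases h : c = a
    · subst h
      by_cases h' : c = b
      · simp only [h', if_true]; linear_combination h2 + h3 - 2 * h4
      · simp only [h', if_true, if_false]; linear_combination h3 - h4
    · by_cases h' : c = b
      · simp only [h, h', if_true, if_false]
        have : b ≠ a := fun hh => h (h'.trans hh)
        simp only [this, if_false]
        linear_combination h3 - h4
      · simp only [h, h', if_false]; linear_combination h3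
  simp_rw [this]
  rw [Finset.sum_add_distrib, Finset.sum_sub_distrib, Finset.sum_sub_distrib]
  simp
  field_simp
  left
  ring

abbrev Om (p n : ℕ) := Fin p → Fin n

def fh {p n : ℕ} (φ : Om p n → ℝ) (χ : Fin p → Option (Fin n)) : ℝ :=
  ∑ x, (∏ k, fe n (χ k) (x k) / n) * φ x

def QQ {p n : ℕ} (r : Fin p → ℝ) (φ ψ : Om p n → ℝ) : ℝ :=
  ∑ x : Om p n, ∑ y : Om p n,
    (∏ k, (1 + r k * ((if x k = y k then (n:ℝ) else 0) - 1)) / (n:ℝ) ^ 2) * (φ x * ψ y)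

lemma QQ_eq {p n : ℕ} (hn : 0 < n) (r : Fin p → ℝ) (φ ψ : Om p n → ℝ) :
    QQ r φ ψ = ∑ χ : Fin p → Option (Fin n), (∏ k, rho (r k) (χ k)) * (fh φ χ * fh ψ χ) := by
  unfold QQ
  have : ∀ x y : Om p n,
      (∏ k, (1 + r k * ((if x k = y k then (n:ℝ) else 0) - 1)) / (n:ℝ) ^ 2)
      = ∑ χ : Fin p → Option (Fin n), (∏ k, rho (r k) (χ k)) *
        ((∏ k, fe n (χ k) (x k) / n) * (∏ k, fe n (χ k) (y k) / n)) := by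
    intro x y
    simp_rw [← frame hn, Finset.sum_div]
    rw [Finset.prod_univ_sum, Fintype.piFinset_univ]
    refine Finset.sum_congr rfl fun χ _ => ?_
    rw [← Finset.prod_mul_distrib, ← Finset.prod_mul_distrib]
    refine Finset.prod_congr rfl fun k _ => ?_
    ring
  simp_rw [this, Finset.sum_mul]
  simp_rw [Finset.sum_comm (s := (univ : Finset (Om p n))) (t := (univ : Finset (Fin p → Option (Fin n))))]
  refine Finset.sum_congr rfl fun χ _ => ?_
  unfold fh
  rw [Finset.sum_mul_sum, Finset.mul_sum]
  refine Finset.sum_congr rfl fun x _ => ?_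
  rw [Finset.mul_sum]
  refine Finset.sum_congr rfl fun y _ => ?_
  ring

lemma QQ_perm {p n : ℕ} (hn : 3 ≤ n) {i i' : Fin n} (h : i ≠ i') (φ ψ : Om p n → ℝ) :
    av (fun xs : Fin p → Equiv.Perm (Fin n) => φ (fun k => xs k i) * ψ (fun k => xs k i'))
      = QQ (fun _ => -(1 / ((n:ℝ) - 1))) φ ψ :=
  transferG2 (Z := Equiv.Perm (Fin n)) (fun _ σ => σ i) (fun _ σ => σ i') _ (fun _ a b => perm_w2 hn h a b) φ ψ

lemma av_Om {p n : ℕ} (φ : Om p n → ℝ) : av φ = ∑ y : Om p n, (∏ _k : Fin p, (1:ℝ) / n) * φ y := by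
  unfold av
  rw [← Finset.mul_sum]
  simp [div_eq_inv_mul]

lemma av_perm {p n : ℕ} (hn : 3 ≤ n) (i : Fin n) (φ : Om p n → ℝ) :
    av (fun xs : Fin p → Equiv.Perm (Fin n) => φ (fun k => xs k i)) = av φ := by
  rw [av_Om]
  exact transferG (Z := Equiv.Perm (Fin n)) (fun _ σ => σ i) (fun _ _ => 1 / n) (fun _ a => perm_w1 hn i a) φ

lemma QQ_one {p n : ℕ} (hn : 0 < n) (φ ψ : Om p n → ℝ) :
    QQ (fun _ => 1) φ ψ = av (fun x => φ x * ψ x) := by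
  have hn' : (0:ℝ) < n := by exact_mod_cast hn
  have := transferG2 (ι := Fin p) (Z := Fin n) (Y := Fin n) (fun _ z => z) (fun _ z => z)
    (fun _ a b => (1 + 1 * ((if a = b then (n:ℝ) else 0) - 1)) / (n:ℝ) ^ 2)
    (by
      intro k a b
      unfold av
      by_cases h : a = b
      · subst h; simp; field_simp
      · have : ∀ z : Fin n, ¬ (z = a ∧ z = b) := by
          rintro z ⟨h1, h2⟩; exact h (h1.symm.trans h2)
        simp [this, h]) φ ψ
  exact this.symm

lemma QQ_zero {p n : ℕ} (φ ψ : Om p n → ℝ) :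
    QQ (fun _ => 0) φ ψ = av φ * av ψ := by
  unfold QQ
  rw [av_Om, av_Om, Finset.sum_mul_sum]
  refine Finset.sum_congr rfl fun x _ => Finset.sum_congr rfl fun y _ => ?_
  simp
  ring

lemma av_pw {p n : ℕ} (hn : 0 < n) (S : Finset (Fin p)) (φ : Om p n → ℝ) :
    av (fun x : Om p n => av fun z : Om p n => φ (S.piecewise x z)) = av φ := by
  have hn' : (0:ℝ) < n := by exact_mod_cast hn
  rw [← av_prod (fun q : Om p n × Om p n => φ (S.piecewise q.1 q.2)),
    ← av_equiv (Equiv.arrowProdEquivProdArrow (Fin p) (fun _ => Fin n) (fun _ => Fin n)), av_Om]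
  refine Eq.trans ?_ (transferG (fun k (z : Fin n × Fin n) => if k ∈ S then z.1 else z.2)
    (fun _ _ => 1 / n) ?_ φ)
  · congr 1
  · intro k a
    have : Nonempty (Fin n) := ⟨⟨0, hn⟩⟩
    have h5 : av (fun z : Fin n => if z = a then (1:ℝ) else 0) = 1 / n := by
      unfold av; simp
    by_cases h : k ∈ S
    · simp only [h, if_true]
      rw [av_prod, av_comm]
      exact (av_const (α := Fin n) _).trans h5
    · simp only [h, if_false]
      rw [av_prod]
      exact (av_const (α := Fin n) _).trans h5

lemma QQ_pw {p n : ℕ} (hn : 0 < n) (S : Finset (Fin p)) (φ : Om p n → ℝ) :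
    av (fun x : Om p n => (av fun z : Om p n => φ (S.piecewise x z)) ^ 2)
      = QQ (fun k => if k ∈ S then 1 else 0) φ φ := by
  have hn' : (0:ℝ) < n := by exact_mod_cast hn
  have : ∀ x : Om p n, (av fun z : Om p n => φ (S.piecewise x z)) ^ 2
     = av fun q : Om p n × Om p n => φ (S.piecewise x q.1) * φ (S.piecewise x q.2) := by
    intro x
    rw [av_prod, sq]
    simp_rw [av_mul_left, av_mul_right]
  simp_rw [this]
  rw [← av_prod (fun q : Om p n × (Om p n × Om p n) => φ (S.piecewise q.1 q.2.1) * φ (S.piecewise q.1 q.2.2))]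
  rw [← av_equiv (((Equiv.arrowProdEquivProdArrow (Fin p) (fun _ => Fin n) (fun _ => Fin n × Fin n))).trans
    (Equiv.prodCongr (Equiv.refl _) (Equiv.arrowProdEquivProdArrow (Fin p) (fun _ => Fin n) (fun _ => Fin n))))]
  refine Eq.trans ?_ (transferG2 (fun k (z : Fin n × (Fin n × Fin n)) => if k ∈ S then z.1 else z.2.1)
    (fun k (z : Fin n × (Fin n × Fin n)) => if k ∈ S then z.1 else z.2.2)
    (fun k a b => (1 + (if k ∈ S then 1 else 0) * ((if a = b then (n:ℝ) else 0) - 1)) / (n:ℝ) ^ 2) ?_ φ φ)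
  · congr 1
  · intro k a b
    by_cases h : k ∈ S
    · simp only [h, if_true]
      unfold av
      rw [Fintype.sum_prod_type]
      by_cases hab : a = b
      · subst hab
        simp
        field_simp
      · have : ∀ z : Fin n, ¬ (z = a ∧ z = b) := by
          rintro z ⟨h1, h2⟩; exact hab (h1.symm.trans h2)
        simp [this, hab]
    · simp only [h, if_false]
      unfold av
      simp_rw [Fintype.sum_prod_type, ite_and]
      have h3 : ∀ x1 : Fin n, (∑ x2 : Fin n, if x1 = a then if x2 = b then (1:ℝ) else 0 else 0)
          = if x1 = a then 1 else 0 := by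
        intro x1; split_ifs <;> simp
      simp_rw [h3]
      simp
      field_simp

def lev {p n : ℕ} (χ : Fin p → Option (Fin n)) : ℕ := #{k | χ k ≠ none}

def WW {p n : ℕ} (φ : Om p n → ℝ) : ℝ :=
  ∑ χ : Fin p → Option (Fin n), (if 2 ≤ lev χ then 1 else 0) * fh φ χ ^ 2

lemma prod_rho {p n : ℕ} (r : ℝ) (χ : Fin p → Option (Fin n)) :
    ∏ k, rho r (χ k) = r ^ lev χ := by
  have : ∀ k, rho r (χ k) = if χ k ≠ none then r else 1 := by
    intro k; cases h : χ k <;> simp [rho]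
  simp_rw [this, Finset.prod_ite, lev]
  simp

lemma prod_rho_S {p n : ℕ} (S : Finset (Fin p)) (χ : Fin p → Option (Fin n)) :
    ∏ k, rho (if k ∈ S then 1 else 0) (χ k) = if ∀ k, χ k ≠ none → k ∈ S then (1:ℝ) else 0 := by
  have : ∀ k, rho (if k ∈ S then 1 else 0) (χ k) = if χ k ≠ none → k ∈ S then (1:ℝ) else 0 := by
    intro k; cases h : χ k <;> simp [rho]
  simp_rw [this]
  rw [Finset.prod_ite_zero]
  simp

lemma W_bound {p n : ℕ} (hn : 0 < n) (S : Finset (Fin p)) (φ : Om p n → ℝ) :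
    QQ (fun _ => 1) φ φ - QQ (fun k => if k ∈ S then 1 else 0) φ φ
      - QQ (fun k => if k ∈ Sᶜ then 1 else 0) φ φ + QQ (fun _ => 0) φ φ ≤ WW φ := by
  simp_rw [QQ_eq hn, prod_rho_S, prod_rho]
  unfold WW
  rw [← Finset.sum_sub_distrib, ← Finset.sum_sub_distrib, ← Finset.sum_add_distrib]
  refine Finset.sum_le_sum fun χ _ => ?_
  have hA : (0:ℝ) ≤ if ∀ k, χ k ≠ none → k ∈ S then (1:ℝ) else 0 := by positivity
  have hB : (0:ℝ) ≤ if ∀ k, χ k ≠ none → k ∈ Sᶜ then (1:ℝ) else 0 := by positivity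
  have : (1 : ℝ) ^ lev χ - (if ∀ k, χ k ≠ none → k ∈ S then (1:ℝ) else 0)
      - (if ∀ k, χ k ≠ none → k ∈ Sᶜ then (1:ℝ) else 0) + (0:ℝ) ^ lev χ
      ≤ if 2 ≤ lev χ then 1 else 0 := by
    by_cases h2 : 2 ≤ lev χ
    · rw [if_pos h2, zero_pow (by omega), one_pow]
      linarith
    · rw [if_neg h2, one_pow]
      by_cases h0 : lev χ = 0
      · have h : ∀ k, χ k = none := by
          simpa [lev, Finset.filter_eq_empty_iff] using h0
        simp [h, h0]
      · have h1 : lev χ = 1 := by omega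
        rw [h1, pow_one]
        obtain ⟨k, hk⟩ := Finset.card_eq_one.mp h1
        have hk' : ∀ l, χ l ≠ none → l = k := by
          intro l hl
          have : l ∈ ({k | χ k ≠ none} : Finset (Fin p)) := by simp [hl]
          rw [hk] at this
          simpa using this
        by_cases hS : k ∈ S
        · have : ∀ l, χ l ≠ none → l ∈ S := fun l hl => by rw [hk' l hl]; exact hS
          rw [if_pos this] at *
          linarith
        · have : ∀ l, χ l ≠ none → l ∈ Sᶜ := fun l hl => by rw [hk' l hl]; simpa using hS
          rw [if_pos this] at *
          linarith
  nlinarith [mul_le_mul_of_nonneg_right this (sq_nonneg (fh φ χ))]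

lemma pair_bound {p n : ℕ} (hn : 0 < n) (l : ℝ) (hl0 : 0 ≤ l) (hl1 : l ≤ 1) (φ ψ : Om p n → ℝ) :
    QQ (fun _ => 0) φ ψ + l / 2 * (QQ (fun _ => 0) φ φ + QQ (fun _ => 0) ψ ψ)
      - l / 2 * (QQ (fun _ => 1) φ φ + QQ (fun _ => 1) ψ ψ)
      + (l - l ^ 2) / 2 * (WW φ + WW ψ) ≤ QQ (fun _ => -l) φ ψ := by
  simp_rw [QQ_eq hn, prod_rho]
  unfold WW
  simp only [← Finset.sum_sub_distrib, ← Finset.sum_add_distrib, Finset.mul_sum]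
  refine Finset.sum_le_sum fun χ _ => ?_
  set a := fh φ χ
  set b := fh ψ χ
  by_cases h2 : 2 ≤ lev χ
  · rw [if_pos h2, zero_pow (by omega), one_pow]
    have h3 : |(-l) ^ lev χ| ≤ l ^ 2 := by
      rw [abs_pow, abs_neg, abs_of_nonneg hl0]
      exact pow_le_pow_of_le_one hl0 hl1 h2
    have h4 : |(-l) ^ lev χ * (a * b)| ≤ l ^ 2 * ((a ^ 2 + b ^ 2) / 2) := by
      rw [abs_mul]
      refine mul_le_mul h3 ?_ (abs_nonneg _) (sq_nonneg _)
      rw [abs_le]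
      constructor <;> nlinarith [sq_nonneg (a - b), sq_nonneg (a + b)]
    have := (abs_le.mp h4).1
    linarith
  · rw [if_neg h2, one_pow]
    by_cases h0 : lev χ = 0
    · rw [h0]; simp only [pow_zero]; linarith
    · have h1 : lev χ = 1 := by omega
      rw [h1]; simp only [pow_one]
      nlinarith [mul_nonneg hl0 (sq_nonneg (a - b))]

lemma av_var {X : Type*} [Fintype X] [Nonempty X] (g : X → ℝ) :
    av (fun x => av fun x' => (g x - g x') ^ 2) = 2 * av (fun x => g x ^ 2) - 2 * av g ^ 2 := by
  have : ∀ x x', (g x - g x') ^ 2 = g x ^ 2 + g x' ^ 2 - (2 * g x) * g x' := by intros; ring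
  simp_rw [this, av_sub, av_add, av_mul_left, av_mul_right, av_const, av_mul_left]
  ring

lemma EF_eq {X Y : Type*} [Fintype X] [Nonempty X] [Fintype Y] [Nonempty Y] (h : X → Y → ℝ) :
    av (fun z => av fun z' => av fun x => av fun x' => (h x z - h x' z - h x z' + h x' z') ^ 2)
     = 4 * (av (fun x => av fun z => h x z ^ 2) - av (fun x => (av fun z => h x z) ^ 2)
        - av (fun z => (av fun x => h x z) ^ 2) + (av fun x => av fun z => h x z) ^ 2) := by
  have h1 : ∀ z z' x x', h x z - h x' z - h x z' + h x' z' = (h x z - h x z') - (h x' z - h x' z') := by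
    intros; ring
  simp_rw [h1, fun z z' => av_var (fun x => h x z - h x z'), av_sub, av_mul_left]
  rw [av_var (fun z => av fun x => h x z)]
  have h2 : av (fun z => av fun z' => av fun x => (h x z - h x z') ^ 2)
      = av (fun x => av fun z => av fun z' => (h x z - h x z') ^ 2) := by
    rw [av_comm (fun x z => av fun z' => (h x z - h x z') ^ 2)]
    congr 1; ext z
    rw [av_comm]
  rw [h2]
  simp_rw [fun x => av_var (fun z => h x z), av_sub, av_mul_left]
  rw [av_comm (fun x z => h x z)]
  ring

lemma bool_ineq (a b c d e f g h : ℝ) (ha : a = 0 ∨ a = 1) (hb : b = 0 ∨ b = 1)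
    (hc : c = 0 ∨ c = 1) (hd : d = 0 ∨ d = 1) (he : e = 0 ∨ e = 1) (hf : f = 0 ∨ f = 1)
    (hg : g = 0 ∨ g = 1) (hh : h = 0 ∨ h = 1) :
    (a - b) ^ 2 * (c - d) ^ 2 ≤ (e - f - a + b) ^ 2 + (e - c - g + d) ^ 2 + (e - f - g + h) ^ 2 := by
  rcases ha with rfl | rfl <;> rcases hb with rfl | rfl <;> rcases hc with rfl | rfl <;>
  rcases hd with rfl | rfl <;> rcases he with rfl | rfl <;> rcases hf with rfl | rfl <;>
  rcases hg with rfl | rfl <;> rcases hh with rfl | rfl <;> norm_num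

lemma AB {X Y : Type*} [Fintype X] [Nonempty X] [Fintype Y] [Nonempty Y] (h : X → Y → ℝ)
    (hh : ∀ x z, h x z = 0 ∨ h x z = 1) :
    (av fun x => av fun x' => av fun w => (h x w - h x' w) ^ 2) *
    (av fun y => av fun z => av fun z' => (h y z - h y z') ^ 2) ≤
    3 * av (fun z => av fun z' => av fun x => av fun x' => (h x z - h x' z - h x z' + h x' z') ^ 2) := by
  set F : X → X → Y → Y → ℝ := fun x x' z z' => (h x z - h x' z - h x z' + h x' z') ^ 2 with hF
  have key : ∀ x x' w y z z', (h x w - h x' w) ^ 2 * (h y z - h y z') ^ 2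
      ≤ F x x' z w + F x y z z' + F x x' z z' := by
    intro x x' w y z z'
    exact bool_ineq _ _ _ _ _ _ _ _ (hh _ _) (hh _ _) (hh _ _) (hh _ _) (hh x z) (hh x' z) (hh x z') (hh x' z')
  have k2 : (av fun x => av fun x' => av fun w => av fun y => av fun z => av fun z' =>
      (h x w - h x' w) ^ 2 * (h y z - h y z') ^ 2) ≤
      av fun x => av fun x' => av fun w => av fun y => av fun z => av fun z' =>
      F x x' z w + F x y z z' + F x x' z z' :=
    av_mono fun x => av_mono fun x' => av_mono fun w => av_mono fun y => av_mono fun z =>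
      av_mono fun z' => key x x' w y z z'
  simp_rw [av_add, av_mul_left, av_mul_right, av_const] at k2
  refine k2.trans (le_of_eq ?_)
  have e1 : (av fun z => av fun z' => av fun x => av fun x' => F x x' z z')
      = av fun x => av fun x' => av fun z => av fun z' => F x x' z z' := by
    calc _ = av fun z => av fun x => av fun z' => av fun x' => F x x' z z' := by
          congr 1; ext z; rw [av_comm]
      _ = av fun x => av fun z => av fun z' => av fun x' => F x x' z z' := by rw [av_comm]
      _ = av fun x => av fun z => av fun x' => av fun z' => F x x' z z' := by
          congr 1; ext x; congr 1; ext z; rw [av_comm]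
      _ = _ := by
          congr 1; ext x; rw [av_comm]
  have e2 : (av fun x => av fun x' => av fun w => av fun z => F x x' z w)
      = av fun x => av fun x' => av fun z => av fun z' => F x x' z z' := by
    congr 1; ext x; congr 1; ext x'; rw [av_comm]
  rw [e1, e2]
  ring

def Infl {p n : ℕ} (φ : Om p n → ℝ) (S : Finset (Fin p)) : ℝ :=
  av fun u => av fun y => (φ u - φ (S.piecewise y u)) ^ 2

lemma Infl_eq {p n : ℕ} (hn : 0 < n) (φ : Om p n → ℝ) (S : Finset (Fin p)) :
    Infl φ S = av fun x => av fun x' => av fun z =>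
      (φ (S.piecewise x z) - φ (S.piecewise x' z)) ^ 2 := by
  unfold Infl
  rw [← av_pw hn S]
  congr 1; ext x
  rw [av_comm]
  simp

lemma Infl_mul {p n : ℕ} (hn : 0 < n) (φ : Om p n → ℝ) (hφ : ∀ x, φ x = 0 ∨ φ x = 1)
    (S : Finset (Fin p)) : Infl φ S * Infl φ Sᶜ ≤ 12 * WW φ := by
  have : Nonempty (Fin n) := ⟨⟨0, hn⟩⟩
  have h1 := AB (fun x z : Om p n => φ (S.piecewise x z)) (fun x z => hφ _)
  rw [EF_eq] at h1
  rw [← Infl_eq hn] at h1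
  have h2 : Infl φ Sᶜ = av fun y : Om p n => av fun z : Om p n => av fun z' : Om p n =>
      (φ (S.piecewise y z) - φ (S.piecewise y z')) ^ 2 := by
    rw [Infl_eq hn]
    simp_rw [Finset.piecewise_compl]
    rw [av_comm (fun y z => av fun z' => (φ (S.piecewise y z) - φ (S.piecewise y z')) ^ 2)]
    congr 1; ext z
    rw [av_comm]
  rw [← h2] at h1
  have h3 := W_bound hn S φ
  rw [QQ_one hn, QQ_zero, ← QQ_pw hn, ← QQ_pw hn] at h3
  simp_rw [Finset.piecewise_compl] at h3
  rw [av_pw hn S (fun x => φ x ^ 2), av_pw hn S φ] at h1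
  simp_rw [← sq] at h3
  linarith

def ind {p n : ℕ} (f : Fin n → Om p n → Fin n) (i j : Fin n) : Om p n → ℝ :=
  fun x => if f i x = j then 1 else 0

lemma ind01 {p n : ℕ} (f : Fin n → Om p n → Fin n) (i j : Fin n) (x) :
    ind f i j x = 0 ∨ ind f i j x = 1 := by
  unfold ind; split_ifs <;> simp

lemma WW_nonneg {p n : ℕ} (φ : Om p n → ℝ) : 0 ≤ WW φ := by
  unfold WW
  refine Finset.sum_nonneg fun χ _ => mul_nonneg ?_ (sq_nonneg _)
  split_ifs <;> simp

open Classical in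
lemma W_family {p n : ℕ} (hn : 3 ≤ n) (ε : ℝ) (hε : 0 ≤ ε) (f : Fin n → Om p n → Fin n)
    (hf : unifPr (fun xs : Fin p → Equiv.Perm (Fin n) =>
          Function.Bijective (fun i => f i (fun k => xs k i))) ≥ 1 - ε) (i₀ j : Fin n) :
    WW (ind f i₀ j) ≤ 4 * (n:ℝ) ^ 2 * ε := by
  have hn' : (3:ℝ) ≤ n := by exact_mod_cast hn
  have hn0 : 0 < n := by omega
  rw [unifPr_eq] at hf
  set B : (Fin p → Equiv.Perm (Fin n)) → ℝ := fun xs =>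
    if Function.Bijective (fun i => f i (fun k => xs k i)) then 1 else 0 with hB
  replace hf : av B ≥ 1 - ε := by
    simp only [hB]; convert hf
  set l : ℝ := 1 / ((n:ℝ) - 1) with hl
  have hl0 : 0 ≤ l := by rw [hl]; apply div_nonneg <;> linarith
  have hl2 : l ≤ 1 / 2 := by rw [hl]; apply one_div_le_one_div_of_le <;> linarith
  have hln : l * (n - 1) = 1 := by rw [hl]; apply div_mul_cancel₀; linarith
  set s : Fin n → ℝ := fun i => av (ind f i j) with hs
  set W : Fin n → ℝ := fun i => WW (ind f i j) with hW
  have hα : ∀ i i', i ≠ i' → QQ (fun _ => -l) (ind f i j) (ind f i' j) ≤ ε := by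
    intro i i' h
    rw [hl, ← QQ_perm hn h]
    calc _ ≤ av (fun xs => 1 - B xs) := by
          refine av_mono fun xs => ?_
          simp only [hB, ind]
          split_ifs with h1 h2 h3 <;> simp
          exact absurd (h3.1 (h1.trans h2.symm)) h
      _ ≤ ε := by rw [av_sub, av_const]; linarith
  have hβ : 1 - ε ≤ ∑ i, s i := by
    refine hf.le.trans ?_
    have hs' : ∀ i, s i = av (fun xs : Fin p → Equiv.Perm (Fin n) => ind f i j (fun k => xs k i)) :=
      fun i => (av_perm hn i (ind f i j)).symm
    rw [Finset.sum_congr rfl (fun i _ => hs' i), ← av_sum]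
    refine av_mono fun xs => ?_
    have h0 : ∀ i, 0 ≤ ind f i j (fun k => xs k i) := by
      intro i; rcases ind01 f i j (fun k => xs k i) with h | h <;> rw [h]; norm_num
    simp only [hB]
    split_ifs with h
    · obtain ⟨i, hi⟩ := h.2 j
      refine le_trans ?_ (Finset.single_le_sum (fun i _ => h0 i) (Finset.mem_univ i))
      simp [ind, hi]
    · exact Finset.sum_nonneg fun i _ => h0 i
  set t : Fin n → Fin n → ℝ := fun i i' => s i * s i' + l / 2 * (s i * s i + s i' * s i')
      - l / 2 * (s i + s i') + (l - l ^ 2) / 2 * (W i + W i') with ht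
  have ht1 : ∀ i i', t i i' ≤ if i = i' then t i i else ε := by
    intro i i'
    split_ifs with h
    · rw [h]
    · have := pair_bound hn0 l hl0 (by linarith) (ind f i j) (ind f i' j)
      rw [QQ_zero, QQ_zero, QQ_zero, QQ_one hn0, QQ_one hn0] at this
      have hsq : ∀ i x, ind f i j x * ind f i j x = ind f i j x := by
        intro i x; rcases ind01 f i j x with h | h <;> rw [h] <;> norm_num
      simp_rw [hsq] at this
      exact this.trans (hα i i' h)
  have hsum : ∑ i, ∑ i', t i i' ≤ ∑ i, (t i i + n * ε) := by
    refine Finset.sum_le_sum fun i _ => ?_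
    calc _ ≤ ∑ i', if i = i' then t i i else ε := Finset.sum_le_sum fun i' _ => ht1 i i'
      _ ≤ ∑ i', ((if i = i' then t i i else 0) + ε) := by
          refine Finset.sum_le_sum fun i' _ => ?_
          split_ifs <;> linarith
      _ = _ := by rw [Finset.sum_add_distrib]; simp
  have hL : ∑ i, ∑ i', t i i' = (∑ i, s i) ^ 2 + l * n * (∑ i, s i * s i) - l * n * (∑ i, s i)
      + (l - l ^ 2) * n * ∑ i, W i := by
    simp only [ht, Finset.sum_add_distrib, Finset.sum_sub_distrib, ← Finset.mul_sum,
      ← Finset.sum_mul, Finset.sum_const, card_univ, Fintype.card_fin, nsmul_eq_mul]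
    have hx : ∑ x, s x * ((n:ℝ) * s x) = n * ∑ x, s x * s x := by
      rw [Finset.mul_sum]; exact Finset.sum_congr rfl fun x _ => by ring
    rw [hx]
    ring
  have hR : ∑ i, (t i i + n * ε) = (1 + l) * (∑ i, s i * s i) - l * (∑ i, s i)
      + (l - l ^ 2) * (∑ i, W i) + n ^ 2 * ε := by
    have : ∀ i, t i i + n * ε = (1 + l) * (s i * s i) - l * s i + (l - l^2) * W i + n * ε := by
      intro i; rw [ht]; ring
    simp_rw [this, Finset.sum_add_distrib, Finset.sum_sub_distrib, ← Finset.mul_sum, Finset.sum_const]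
    simp
    ring
  rw [hL, hR] at hsum
  set s1 := ∑ i, s i
  set s2 := ∑ i, s i * s i
  set w := ∑ i, W i with hw
  have hww : W i₀ ≤ w := Finset.single_le_sum (f := W) (fun i _ => WW_nonneg _) (Finset.mem_univ i₀)
  have hW0 : 0 ≤ W i₀ := WW_nonneg _
  have e1 : l * n = 1 + l := by linarith
  have e2 : s1 ^ 2 - s1 + (1 - l) * w ≤ n ^ 2 * ε := by
    have h1 : l * n * s2 = (1 + l) * s2 := by rw [e1]
    have h2 : l * n * s1 = (1 + l) * s1 := by rw [e1]
    have h3 : (l - l ^ 2) * n * w = (1 - l) * (1 + l) * w := by rw [← e1]; ring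
    rw [h1, h2, h3] at hsum
    linarith
  have e3 : s1 - s1 ^ 2 ≤ ε := by
    by_cases h : 1 ≤ s1
    · nlinarith
    · nlinarith
  have e4 : (1 / 2) * w ≤ (1 - l) * w := mul_le_mul_of_nonneg_right (by linarith) (hW0.trans hww)
  have e5 : ε ≤ n ^ 2 * ε := le_mul_of_one_le_left hε (by nlinarith)
  linarith

lemma Infl_nonneg {p n : ℕ} (φ : Om p n → ℝ) (S : Finset (Fin p)) : 0 ≤ Infl φ S :=
  av_nonneg fun _ => av_nonneg fun _ => sq_nonneg _

lemma junta {p n : ℕ} (hn : 0 < n) (hp : 0 < p) (φ : Om p n → ℝ) (hφ : ∀ x, φ x = 0 ∨ φ x = 1)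
    (δ : ℝ) (hδ : 0 ≤ δ) (H : ∀ S, Infl φ S * Infl φ Sᶜ ≤ δ ^ 2) :
    ∃ k : Fin p, ∃ G : Fin n → ℝ, (∀ a, G a = 0 ∨ G a = 1) ∧
      av (fun x => (φ x - G (x k)) ^ 2) ≤ 4 * δ := by
  have : Nonempty (Fin n) := ⟨⟨0, hn⟩⟩
  have H' : ∀ S, Infl φ S ≤ δ ∨ Infl φ Sᶜ ≤ δ := by
    intro S
    by_contra h
    push Not at h
    have := H S
    nlinarith [h.1, h.2]
  set T : ℕ → Finset (Fin p) := fun m => univ.filter (fun l => l.val < m) with hT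
  have hex : ∃ m, Infl φ (T m)ᶜ ≤ δ := by
    refine ⟨p, ?_⟩
    have : (T p)ᶜ = ∅ := by ext l; simp [hT]
    rw [this]
    simp [Infl, av_const, hδ]
  classical
  obtain ⟨m, hm, hmin⟩ : ∃ m, Infl φ (T m)ᶜ ≤ δ ∧ ∀ m' < m, ¬ Infl φ (T m')ᶜ ≤ δ :=
    ⟨Nat.find hex, Nat.find_spec hex, fun m' h => Nat.find_min hex h⟩
  rcases Nat.eq_zero_or_pos m with h0 | h0
  · subst h0
    have : (T 0)ᶜ = univ := by ext l; simp [hT]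
    rw [this] at hm
    unfold Infl at hm
    simp only [Finset.piecewise_univ] at hm
    rw [av_comm] at hm
    obtain ⟨y, hy⟩ := exists_le_av (fun y : Om p n => av fun x => (φ x - φ y) ^ 2)
    exact ⟨⟨0, hp⟩, fun _ => φ y, fun _ => hφ y, by linarith⟩
  · obtain ⟨k, rfl⟩ : ∃ k, m = k + 1 := ⟨m - 1, by omega⟩
    have hk : Infl φ (T k) ≤ δ := (H' (T k)).resolve_right (hmin k (by omega))
    by_cases hkp : k < p
    swap
    · exfalso
      apply hmin k (by omega)
      have : (T k)ᶜ = ∅ := by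
        ext l; simp [hT]; omega
      rw [this]
      simp [Infl, av_const, hδ]
    unfold Infl at hm hk
    rw [av_comm] at hm
    obtain ⟨y', hy'⟩ := exists_le_av
      (fun y : Om p n => av fun x => (φ x - φ ((T (k + 1))ᶜ.piecewise y x)) ^ 2)
    set g : Om p n → ℝ := fun x => φ ((T (k + 1))ᶜ.piecewise y' x) with hg
    have hgφ : av (fun x => (φ x - g x) ^ 2) ≤ δ := hy'.trans hm
    have h1 : av (fun y : Om p n => av fun x => (φ x - g ((T k).piecewise y x)) ^ 2) ≤ 4 * δ := by
      calc _ ≤ av (fun y : Om p n => av fun x => 2 * (φ x - φ ((T k).piecewise y x)) ^ 2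
            + 2 * (φ ((T k).piecewise y x) - g ((T k).piecewise y x)) ^ 2) := by
            refine av_mono fun y => av_mono fun x => ?_
            nlinarith [sq_nonneg ((φ x - φ ((T k).piecewise y x)) - (φ ((T k).piecewise y x) - g ((T k).piecewise y x)))]
        _ = 2 * av (fun y : Om p n => av fun x => (φ x - φ ((T k).piecewise y x)) ^ 2)
            + 2 * av (fun x => (φ x - g x) ^ 2) := by
            simp_rw [av_add, av_mul_left]
            rw [av_pw hn (T k) (fun x => (φ x - g x) ^ 2)]
        _ ≤ _ := by rw [av_comm]; linarith
    obtain ⟨y, hy⟩ := exists_le_av (fun y : Om p n => av fun x => (φ x - g ((T k).piecewise y x)) ^ 2)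
    refine ⟨⟨k, hkp⟩, fun a => g ((T k).piecewise y (fun _ => a)), fun a => hφ _, ?_⟩
    refine le_trans (le_of_eq ?_) (hy.trans h1)
    congr 1; ext x
    congr 2
    simp only [hg]
    congr 1
    ext l
    congr 1
    by_cases h1 : l.val < k + 1
    · by_cases h2 : l.val < k
      · simp [Finset.piecewise, hT, h2]
      · have : l = ⟨k, hkp⟩ := Fin.ext (by simp; omega)
        subst this
        simp [Finset.piecewise, hT]
    · have h2 : k < l.val := by omega
      simp [Finset.piecewise, hT, h2]

lemma unifPr_mono {α : Type*} [Fintype α] {P Q : α → Prop} (h : ∀ x, P x → Q x) :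
    unifPr P ≤ unifPr Q := by
  classical
  rw [unifPr_eq, unifPr_eq]
  refine av_mono fun x => ?_
  by_cases hp : P x
  · simp [hp, h x hp]
  · simp only [hp, if_false]; split_ifs <;> simp

lemma unifPr_or {α : Type*} [Fintype α] (P Q : α → Prop) :
    unifPr (fun x => P x ∨ Q x) ≤ unifPr P + unifPr Q := by
  classical
  rw [unifPr_eq, unifPr_eq, unifPr_eq, ← av_add]
  refine av_mono fun x => ?_
  by_cases hp : P x <;> by_cases hq : Q x <;> simp [hp, hq]

lemma unifPr_ex {α β : Type*} [Fintype α] [Fintype β] (P : β → α → Prop) :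
    unifPr (fun x => ∃ b, P b x) ≤ ∑ b, unifPr (P b) := by
  classical
  simp_rw [unifPr_eq]
  rw [← av_sum]
  refine av_mono fun x => ?_
  have h0 : ∀ b ∈ (univ : Finset β), (0:ℝ) ≤ if P b x then 1 else 0 := by
    intro b _; split_ifs <;> simp
  split_ifs with h
  · obtain ⟨b, hb⟩ := h
    refine le_trans ?_ (Finset.single_le_sum h0 (mem_univ b))
    simp [hb]
  · exact Finset.sum_nonneg h0

lemma junta' {p n : ℕ} (hn : 3 ≤ n) (hp : 0 < p) (ε : ℝ) (hε : 0 ≤ ε) (f : Fin n → Om p n → Fin n)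
    (hf : unifPr (fun xs : Fin p → Equiv.Perm (Fin n) =>
          Function.Bijective (fun i => f i (fun k => xs k i))) ≥ 1 - ε) (i j : Fin n) :
    ∃ k : Fin p, ∃ G : Fin n → Prop,
      unifPr (fun x : Om p n => ¬ (f i x = j ↔ G (x k))) ≤ 4 * √(48 * (n:ℝ) ^ 2 * ε) := by
  obtain ⟨k, G, hG, h⟩ := junta (by omega) hp (ind f i j) (ind01 f i j) (√(48 * (n:ℝ) ^ 2 * ε))
    (Real.sqrt_nonneg _) (by
      intro S
      rw [Real.sq_sqrt (by positivity)]
      have h1 := Infl_mul (by omega) (ind f i j) (ind01 f i j) S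
      have h2 := W_family hn ε hε f hf i j
      linarith)
  refine ⟨k, fun a => G a = 1, le_trans ?_ h⟩
  classical
  rw [unifPr_eq]
  refine av_mono fun x => ?_
  by_cases h1 : f i x = j <;> rcases hG (x k) with h2 | h2 <;> simp [ind, h1, h2]

lemma pattern {p : ℕ} {Z : Type*} [Fintype Z] [DecidableEq Z] [Nonempty Z] (U : Finset (Fin p)) (z : Fin p → Z)
    (M : ℕ) (hU : #U ≤ M) :
    1 / (Fintype.card Z : ℝ) ^ M ≤ unifPr (fun xs : Fin p → Z => ∀ l ∈ U, xs l = z l) := by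
  have hZ : 1 ≤ Fintype.card Z := Fintype.card_pos
  have hZ' : (1:ℝ) ≤ Fintype.card Z := by exact_mod_cast hZ
  have h1 : Nat.card {xs : Fin p → Z // ∀ l ∈ U, xs l = z l}
     = ∏ l : Fin p, if l ∈ U then 1 else Fintype.card Z := by
    rw [Nat.card_eq_fintype_card, Fintype.card_subtype]
    have : (univ.filter fun xs : Fin p → Z => ∀ l ∈ U, xs l = z l)
       = Fintype.piFinset (fun l => if l ∈ U then {z l} else univ) := by
      ext xs
      simp only [mem_filter, mem_univ, true_and, Fintype.mem_piFinset]
      refine forall_congr' fun l => ?_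
      by_cases h : l ∈ U <;> simp [h]
    rw [this, Fintype.card_piFinset]
    refine Finset.prod_congr rfl fun l _ => ?_
    by_cases h : l ∈ U <;> simp [h]
  have h2 : (∏ l : Fin p, if l ∈ U then 1 else Fintype.card Z) * Fintype.card Z ^ #U
      = Fintype.card (Fin p → Z) := by
    have : Fintype.card Z ^ #U = ∏ l : Fin p, if l ∈ U then Fintype.card Z else 1 := by
      rw [Finset.prod_ite]; simp
    rw [this, ← Finset.prod_mul_distrib]
    rw [Fintype.card_fun, Fintype.card_fin]
    rw [Finset.prod_congr rfl (g := fun _ => Fintype.card Z)]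
    · simp
    · intro l _; split_ifs <;> simp
  unfold unifPr
  rw [h1, ← h2]
  set A := ∏ l : Fin p, if l ∈ U then 1 else Fintype.card Z
  have hA : 0 < A := by
    refine Finset.prod_pos fun l _ => ?_
    split_ifs <;> omega
  have hA' : (0:ℝ) < A := by exact_mod_cast hA
  push_cast
  rw [div_mul_eq_div_div, div_self hA'.ne']
  exact one_div_le_one_div_of_le (by positivity) (pow_le_pow_right₀ hZ' hU)

lemma exact_class {p n : ℕ} (hn : 3 ≤ n) (k : Fin n → Fin n → Fin p)
    (G : Fin n → Fin n → Fin n → Prop)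
    (H : ∀ z : Fin p → Equiv.Perm (Fin n), ∃ σ : Fin n → Fin n, Function.Bijective σ ∧
      ∀ i j, (σ i = j ↔ G i j (z (k i j) i))) :
    (∃ k0 : Fin p, ∃ π : Equiv.Perm (Fin n), ∀ i j, k i j = k0 ∧ ∀ a, (G i j a ↔ π a = j)) ∨
    (∀ j, ∃ i, ∀ a, G i j a) := by
  have H1 : ∀ (z : Fin p → Equiv.Perm (Fin n)) i i' j, G i j (z (k i j) i) →
      G i' j (z (k i' j) i') → i = i' := by
    intro z i i' j h h'
    obtain ⟨σ, hσ, hh⟩ := H z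
    exact hσ.1 (((hh i j).2 h).trans ((hh i' j).2 h').symm)
  have H2 : ∀ (z : Fin p → Equiv.Perm (Fin n)) i j j', G i j (z (k i j) i) →
      G i j' (z (k i j') i) → j = j' := by
    intro z i j j' h h'
    obtain ⟨σ, hσ, hh⟩ := H z
    exact ((hh i j).2 h).symm.trans ((hh i j').2 h')
  have H3 : ∀ (z : Fin p → Equiv.Perm (Fin n)) j, ∃ i, G i j (z (k i j) i) := by
    intro z j
    obtain ⟨σ, hσ, hh⟩ := H z
    obtain ⟨i, hi⟩ := hσ.2 j
    exact ⟨i, (hh i j).1 hi⟩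
  have P : ∀ i i' j a b, i ≠ i' → G i j a → G i' j b → k i j = k i' j ∧ a = b := by
    intro i i' j a b hi ha hb
    by_contra hc
    by_cases hk : k i j = k i' j
    · have hab : a ≠ b := fun h => hc ⟨hk, h⟩
      obtain ⟨τ, h1, h2⟩ := exists_perm2 hi hab
      exact hi (H1 (fun _ => τ) i i' j (by rw [h1]; exact ha) (by rw [h2]; exact hb))
    · refine hi (H1 (fun l => if l = k i j then Equiv.swap i a else Equiv.swap i' b) i i' j ?_ ?_)
      · simpa using ha
      · simpa [Ne.symm hk] using hb
  have B : ∀ j, (¬ ∃ i, ∀ a, G i j a) → ∃ kj s, ∀ i, k i j = kj ∧ ∀ a, (G i j a ↔ a = s) := by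
    intro j hj
    push Not at hj
    obtain ⟨i, hi⟩ := H3 (fun _ => 1) j
    obtain ⟨a', ha'⟩ := hj i
    obtain ⟨i', hi'⟩ := H3 (fun _ => Equiv.swap i a') j
    have hne : i ≠ i' := by
      rintro rfl
      simp at hi'
      exact ha' hi'
    set s := ((1 : Equiv.Perm (Fin n)) i) with hs
    obtain ⟨hk, hs'⟩ := P i i' j _ _ hne hi hi'
    rw [← hs'] at hi'
    have Q : ∀ i'' b, G i'' j b → k i'' j = k i j ∧ b = s := by
      intro i'' b hb
      by_cases h : i'' = i
      · subst h
        have := P _ _ j _ _ hne hb hi'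
        exact ⟨rfl, this.2⟩
      · have := P _ _ j _ _ h hb hi
        exact this
    refine ⟨k i j, s, fun i'' => ?_⟩
    have R : G i'' j s := by
      obtain ⟨i3, h3⟩ := H3 (fun _ => Equiv.swap i'' s) j
      obtain ⟨h4, h5⟩ := Q _ _ h3
      have : i3 = i'' := by
        apply (Equiv.swap i'' s).injective
        rw [h5]; simp
      subst this
      rw [h5] at h3
      exact h3
    exact ⟨(Q _ _ R).1, fun a => ⟨fun h => (Q _ _ h).2, fun h => h ▸ R⟩⟩
  by_cases hall : ∀ j, ∃ i, ∀ a, G i j a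
  · exact Or.inr hall
  left
  push Not at hall
  obtain ⟨j0, hj0⟩ := hall
  obtain ⟨k0, s0, h0⟩ := B j0 (by push Not; exact hj0)
  have C : ∀ j, ∃ s, ∀ i, k i j = k0 ∧ ∀ a, (G i j a ↔ a = s) := by
    intro j
    have hb : ¬ ∃ i, ∀ a, G i j a := by
      rintro ⟨i, hi⟩
      have := H2 (fun _ => Equiv.swap i s0) i j j0 (hi _) (((h0 i).2 _).2 (by simp))
      subst this
      obtain ⟨a, ha⟩ := hj0 i
      exact ha (hi a)
    obtain ⟨kj, s, hs⟩ := B j hb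
    refine ⟨s, fun i => ⟨?_, (hs i).2⟩⟩
    by_contra hk
    have := H2 (fun l => if l = k0 then Equiv.swap i s0 else Equiv.swap i s) i j j0
      (((hs i).2 _).2 (by simp [hk])) (((h0 i).2 _).2 (by simp [(h0 i).1]))
    subst this
    exact hk (h0 i).1
  choose s hs using C
  have i0 : Fin n := ⟨0, by omega⟩
  have hinj : Function.Injective s := by
    intro j j' h
    exact H2 (fun _ => Equiv.swap i0 (s j)) i0 j j' (((hs j i0).2 _).2 (by simp))
      (((hs j' i0).2 _).2 (by simp [h]))
  let e : Equiv.Perm (Fin n) := Equiv.ofBijective s (Finite.injective_iff_bijective.mp hinj)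
  refine ⟨k0, e.symm, fun i j => ⟨(hs j i).1, fun a => ?_⟩⟩
  rw [(hs j i).2, Equiv.symm_apply_eq]
  rfl

open Classical in
lemma unifPr_perm {p n : ℕ} (hn : 3 ≤ n) (i : Fin n) (P : Om p n → Prop) :
    unifPr (fun xs : Fin p → Equiv.Perm (Fin n) => P (fun k => xs k i)) = unifPr P := by
  rw [unifPr_eq, unifPr_eq]
  exact av_perm hn i (fun x => if P x then 1 else 0)

open Classical in
lemma unifPr_not {α : Type*} [Fintype α] [Nonempty α] (P : α → Prop) :
    unifPr (fun x => ¬ P x) = 1 - unifPr P := by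
  rw [unifPr_eq, unifPr_eq]
  have h : (av fun x => if ¬ P x then (1:ℝ) else 0) = av fun x => 1 - if P x then (1:ℝ) else 0 := by
    congr 1; ext x; by_cases hx : P x <;> simp [hx]
  rw [av_sub, av_const] at h
  rw [← h]
  congr 1; ext x; by_cases hx : P x <;> simp [hx]

lemma main_aux (n : ℕ) (hn : 3 ≤ n) (p : ℕ) (hp : 0 < p) (ε : ℝ) (hε : 0 ≤ ε)
    (f : Fin n → (Fin p → Fin n) → Fin n)
    (hf : unifPr (fun xs : Fin p → Equiv.Perm (Fin n) =>
          Function.Bijective (fun i => f i (fun k => xs k i))) ≥ 1 - ε)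
    (η : ℝ) (hη : η = 4 * √(48 * (n:ℝ) ^ 2 * ε))
    (hsmall : ε + n ^ 2 * η < 1 / (n.factorial : ℝ) ^ (n ^ 2)) :
    (∃ k : Fin p, ∃ π : Equiv.Perm (Fin n), ∀ i : Fin n,
            unifPr (fun x : Fin p → Fin n => f i x ≠ π (x k)) ≤ n * η) ∨
         (∀ j : Fin n, ∃ i : Fin n,
            unifPr (fun x : Fin p → Fin n => f i x ≠ j) ≤ n * η) := by
  have hη0 : 0 ≤ η := by rw [hη]; positivity
  have hn' : (3:ℝ) ≤ n := by exact_mod_cast hn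
  choose k G hG using junta' hn hp ε hε f hf
  simp_rw [← hη] at hG
  have H : ∀ z : Fin p → Equiv.Perm (Fin n), ∃ σ : Fin n → Fin n, Function.Bijective σ ∧
      ∀ i j, (σ i = j ↔ G i j (z (k i j) i)) := by
    intro z
    set U : Finset (Fin p) := univ.image (fun q : Fin n × Fin n => k q.1 q.2) with hU
    have hUc : #U ≤ n ^ 2 := by
      refine Finset.card_image_le.trans ?_
      simp [sq]
    have h1 := pattern U z (n ^ 2) hUc
    rw [Fintype.card_perm, Fintype.card_fin] at h1
    have h2 : unifPr (fun xs : Fin p → Equiv.Perm (Fin n) =>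
        ¬ Function.Bijective (fun i => f i (fun k => xs k i)) ∨
        ∃ q : Fin n × Fin n, ¬ (f q.1 (fun l => xs l q.1) = q.2 ↔ G q.1 q.2 (xs (k q.1 q.2) q.1)))
        ≤ ε + n ^ 2 * η := by
      refine (unifPr_or _ _).trans (add_le_add ?_ ?_)
      · rw [unifPr_not]
        linarith
      · refine (unifPr_ex _).trans ?_
        have : ∀ q : Fin n × Fin n, unifPr (fun xs : Fin p → Equiv.Perm (Fin n) =>
            ¬ (f q.1 (fun l => xs l q.1) = q.2 ↔ G q.1 q.2 (xs (k q.1 q.2) q.1))) ≤ η := by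
          intro q
          refine le_trans (le_of_eq ?_) (hG q.1 q.2)
          exact unifPr_perm hn q.1 (fun x : Om p n => ¬ (f q.1 x = q.2 ↔ G q.1 q.2 (x (k q.1 q.2))))
        refine (Finset.sum_le_sum fun q _ => this q).trans (le_of_eq ?_)
        simp [sq]
    by_contra hcon
    have h3 := unifPr_mono (P := fun xs : Fin p → Equiv.Perm (Fin n) => ∀ l ∈ U, xs l = z l)
      (Q := fun xs : Fin p → Equiv.Perm (Fin n) =>
        ¬ Function.Bijective (fun i => f i (fun k => xs k i)) ∨
        ∃ q : Fin n × Fin n, ¬ (f q.1 (fun l => xs l q.1) = q.2 ↔ G q.1 q.2 (xs (k q.1 q.2) q.1)))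
      (by
        intro xs hxs
        by_contra hb
        push Not at hb
        apply hcon
        refine ⟨fun i => f i (fun k => xs k i), hb.1, fun i j => ?_⟩
        have := hb.2 (i, j)
        rw [← hxs (k i j) (by rw [hU]; exact mem_image_of_mem (fun q : Fin n × Fin n => k q.1 q.2) (mem_univ (i, j)))]
        by_contra hh
        simp only at this
        tauto)
    linarith
  rcases exact_class hn k G H with ⟨k0, π, h⟩ | h
  · left
    refine ⟨k0, π, fun i => ?_⟩
    calc _ ≤ unifPr (fun x : Fin p → Fin n => ∃ j, ¬ (f i x = j ↔ G i j (x (k i j)))) := by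
          refine unifPr_mono fun x hx => ⟨f i x, ?_⟩
          rw [(h i (f i x)).1, (h i (f i x)).2]
          simp only [true_iff]
          exact fun h => hx h.symm
      _ ≤ ∑ j, unifPr (fun x : Fin p → Fin n => ¬ (f i x = j ↔ G i j (x (k i j)))) := unifPr_ex _
      _ ≤ ∑ _j : Fin n, η := Finset.sum_le_sum fun j _ => hG i j
      _ = _ := by simp
  · right
    intro j
    obtain ⟨i, hi⟩ := h j
    refine ⟨i, le_trans (le_trans (unifPr_mono fun x hx => ?_) (hG i j)) ?_⟩
    · intro hh
      exact hx (hh.2 (hi _))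
    · nlinarith

end

/-- stability theorem for approximate polymorphisms of `Perm_n`, `n ≥ 3`. -/
theorem stmt8 (n : ℕ) (hn : 3 ≤ n) :
    ∃ ε₀ > (0 : ℝ), ∃ K > (0 : ℝ), ∀ p : ℕ, ∀ ε : ℝ, 0 ≤ ε → ε < ε₀ →
      ∀ f : Fin n → (Fin p → Fin n) → Fin n,
        unifPr (fun xs : Fin p → Equiv.Perm (Fin n) =>
          Function.Bijective (fun i => f i (fun k => xs k i))) ≥ 1 - ε →
        ((∃ k : Fin p, ∃ π : Equiv.Perm (Fin n), ∀ i : Fin n,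
            unifPr (fun x : Fin p → Fin n => f i x ≠ π (x k)) ≤ K * ε ^ ((1 : ℝ) / 4)) ∨
         (∀ j : Fin n, ∃ i : Fin n,
            unifPr (fun x : Fin p → Fin n => f i x ≠ j) ≤ K * ε ^ ((1 : ℝ) / 4))) := by
  have hn' : (3:ℝ) ≤ n := by exact_mod_cast hn
  set c : ℝ := 1 / (n.factorial : ℝ) ^ (n ^ 2) with hc
  have hc0 : 0 < c := by positivity
  have hc1 : c ≤ 1 := by
    rw [hc]
    apply div_le_one_of_le₀ _ (by positivity)
    apply one_le_pow₀
    exact_mod_cast Nat.factorial_pos n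
  -- eta = 4 * sqrt 48 * n * sqrt eps
  set D : ℝ := 4 * √(48 * (n:ℝ) ^ 2) with hD
  have hD0 : 0 < D := by positivity
  set M : ℝ := 1 + n ^ 2 * D with hM
  have hM1 : 1 ≤ M := by rw [hM]; nlinarith [mul_pos (by positivity : (0:ℝ) < (n:ℝ) ^ 2) hD0]
  refine ⟨(c / M) ^ 2, by positivity, n * D, by positivity, ?_⟩
  intro p ε hε hε0 f hf
  have hcM : c / M ≤ 1 := div_le_one_of_le₀ (by linarith) (by linarith)
  have hcM0 : 0 < c / M := by positivity
  have hε1 : ε < 1 := by nlinarith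
  have hsq : √ε < c / M := by
    rw [Real.sqrt_lt' hcM0]; exact hε0
  have hεs : ε ≤ √ε := by
    have := Real.sq_sqrt hε
    have h2 := Real.sqrt_nonneg ε
    nlinarith
  have hs4 : √ε ≤ ε ^ ((1:ℝ) / 4) := by
    rw [Real.sqrt_eq_rpow]
    rcases hε.eq_or_lt with h | h
    · rw [← h, Real.zero_rpow (by norm_num), Real.zero_rpow (by norm_num)]
    · exact Real.rpow_le_rpow_of_exponent_ge h hε1.le (by norm_num)
  have hpow0 : 0 ≤ ε ^ ((1:ℝ) / 4) := Real.rpow_nonneg hε _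
  rcases Nat.eq_zero_or_pos p with hp | hp
  · subst hp
    right
    have : Function.Bijective (fun i => f i Fin.elim0) := by
      by_contra hb
      have h0 : unifPr (fun xs : Fin 0 → Equiv.Perm (Fin n) =>
          Function.Bijective (fun i => f i (fun k => xs k i))) = 0 := by
        classical
        rw [unifPr_eq]
        have : ∀ xs : Fin 0 → Equiv.Perm (Fin n),
            ¬ Function.Bijective (fun i => f i (fun k => xs k i)) := by
          intro xs
          have : ∀ i, (fun k => xs k i) = Fin.elim0 := fun i => Subsingleton.elim _ _
          simp_rw [this]
          exact hb
        simp only [this, if_false]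
        simp [av]
      linarith
    intro j
    obtain ⟨i, hi⟩ := this.2 j
    refine ⟨i, ?_⟩
    have h0 : unifPr (fun x : Fin 0 → Fin n => f i x ≠ j) = 0 := by
      classical
      rw [unifPr_eq]
      have : ∀ x : Fin 0 → Fin n, f i x = j := by
        intro x; rw [← hi]; congr 1; exact Subsingleton.elim _ _
      simp [this, av]
    rw [h0]; positivity
  · have hη : D * √ε = 4 * √(48 * (n:ℝ) ^ 2 * ε) := by
      rw [hD, Real.sqrt_mul (by positivity) ε]; ring
    have hfin : n * (D * √ε) ≤ n * D * ε ^ ((1:ℝ) / 4) := by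
      rw [← mul_assoc]
      exact mul_le_mul_of_nonneg_left hs4 (by positivity)
    have := main_aux n hn p hp ε hε f hf (D * √ε) hη (by
      rw [← hc]
      have : M * √ε < c := by
        rw [lt_div_iff₀ (by linarith)] at hsq
        linarith
      rw [hM] at this
      linarith)
    rcases this with ⟨k, π, h⟩ | h
    · exact Or.inl ⟨k, π, fun i => (h i).trans hfin⟩
    · right
      intro j
      obtain ⟨i, hi⟩ := h j
      exact ⟨i, hi.trans hfin⟩
end

section
/- If f_1,…,f_n : [n]^p → [n] are an ε-approximate polymorphism of Perm_n with respect to the uniform distribution, then for every i ≠ j in [n] and every r ∈ [n], the Boolean functions f_{i,r}, f_{j,r} : [n]^p → {0,1} defined by f_{i,r}(x) = 1{f_i(x) = r} and f_{j,r}(x) = 1{f_j(x) = r} are ε-cross-independent. -/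
open Classical in
theorem unifPr_eq_filter {α : Type*} [Fintype α] (P : α → Prop) :
    unifPr P = ((Finset.univ.filter P).card : ℝ) / Fintype.card α := by
  unfold unifPr
  rw [Nat.card_eq_fintype_card, Fintype.card_subtype]

open Classical in
theorem unifPr_comp {α β : Type*} [Fintype α] [Fintype β] [Nonempty α] (g : α → β)
    (hg : ∀ b b', ∃ e : α → α, Function.Injective e ∧ ∀ a, g a = b → g (e a) = b')
    (P : β → Prop) :
    unifPr (fun a => P (g a)) = unifPr P := by
  have hle : ∀ b b', (Finset.univ.filter (fun a => g a = b)).card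
      ≤ (Finset.univ.filter (fun a => g a = b')).card := by
    intro b b'
    obtain ⟨e, he, h⟩ := hg b b'
    apply Finset.card_le_card_of_injOn e
    · intro a ha
      simpa using h a (by simpa using ha)
    · exact he.injOn
  obtain ⟨a0⟩ := (inferInstance : Nonempty α)
  obtain ⟨c, hc⟩ : ∃ c, ∀ b, (Finset.univ.filter (fun a => g a = b)).card = c :=
    ⟨_, fun b => le_antisymm (hle b (g a0)) (hle (g a0) b)⟩
  have key : ∀ Q : β → Prop, (Finset.univ.filter (fun a => Q (g a))).card
      = (Finset.univ.filter Q).card * c := by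
    intro Q
    rw [Finset.card_eq_sum_card_fiberwise (f := g) (t := Finset.univ.filter Q)
      (by intro a ha; simpa using ha)]
    rw [Finset.sum_const_nat (m := c)]
    intro b hb
    rw [← hc b]
    congr 1
    ext a
    simp only [Finset.mem_filter, Finset.mem_univ, true_and] at hb ⊢
    constructor
    · exact fun h => h.2
    · intro h
      exact ⟨h ▸ hb, h⟩
  have h1 := key (fun _ => True)
  simp only [Finset.filter_true, Finset.card_univ] at h1
  have hpos : 0 < Fintype.card α := Fintype.card_pos_iff.mpr ⟨a0⟩
  have hc0 : (c : ℝ) ≠ 0 := by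
    intro h
    have : c = 0 := by exact_mod_cast h
    rw [h1, this] at hpos
    simp at hpos
  rw [unifPr_eq_filter, unifPr_eq_filter, key P, h1]
  push_cast
  exact mul_div_mul_right _ _ hc0

open Classical in
theorem unifPr_add_le {α : Type*} [Fintype α] (P Q : α → Prop) (h : ∀ a, P a → ¬ Q a) :
    unifPr P + unifPr Q ≤ 1 := by
  rw [unifPr_eq_filter, unifPr_eq_filter, ← add_div]
  apply div_le_one_of_le₀ _ (by positivity)
  have hd : Disjoint (Finset.univ.filter P) (Finset.univ.filter Q) := by
    rw [Finset.disjoint_filter]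
    exact fun a _ => h a
  have := Finset.card_le_univ (Finset.univ.filter P ∪ Finset.univ.filter Q)
  rw [Finset.card_union_of_disjoint hd] at this
  exact_mod_cast this

theorem exists_perm_pair {α : Type*} [DecidableEq α] (a b c d : α) (h : a ≠ b) (h' : c ≠ d) :
    ∃ σ : Equiv.Perm α, σ a = c ∧ σ b = d := by
  refine ⟨Equiv.swap (Equiv.swap a c b) d * Equiv.swap a c, ?_, ?_⟩
  · rw [Equiv.Perm.mul_apply, Equiv.swap_apply_left]
    apply Equiv.swap_apply_of_ne_of_ne _ h'
    intro e
    apply h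
    apply (Equiv.swap a c).injective
    rw [Equiv.swap_apply_left]
    exact e
  · rw [Equiv.Perm.mul_apply, Equiv.swap_apply_left]

/-- an ε-approximate polymorphism of `Perm_n` yields ε-cross-independent
indicator functions `f_{i,r}, f_{j,r}` for all `i ≠ j` and `r`. -/
theorem stmt9 (n p : ℕ) (ε : ℝ)
    (f : Fin n → (Fin p → Fin n) → Fin n)
    (happrox : unifPr (fun xs : Fin p → Equiv.Perm (Fin n) =>
      Function.Bijective (fun i => f i (fun k => xs k i))) ≥ 1 - ε) :
    ∀ i j : Fin n, i ≠ j → ∀ r : Fin n,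
      unifPr (fun w : Fin p → {q : Fin n × Fin n // q.1 ≠ q.2} =>
        f i (fun k => (w k).val.1) = r ∧ f j (fun k => (w k).val.2) = r) ≤ ε := by
  intro i j hij r
  let g : (Fin p → Equiv.Perm (Fin n)) → (Fin p → {q : Fin n × Fin n // q.1 ≠ q.2}) :=
    fun xs k => ⟨(xs k i, xs k j), fun e => hij ((xs k).injective e)⟩
  have hg : ∀ b b', ∃ e : (Fin p → Equiv.Perm (Fin n)) → (Fin p → Equiv.Perm (Fin n)),
      Function.Injective e ∧ ∀ a, g a = b → g (e a) = b' := by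
    intro b b'
    have hs : ∀ k, ∃ σ : Equiv.Perm (Fin n), σ (b k).val.1 = (b' k).val.1 ∧
        σ (b k).val.2 = (b' k).val.2 :=
      fun k => exists_perm_pair _ _ _ _ (b k).2 (b' k).2
    choose σ h1 h2 using hs
    refine ⟨fun xs => σ * xs, fun x y hxy => mul_left_cancel hxy, ?_⟩
    intro xs hx
    funext k
    apply Subtype.ext
    rw [Prod.ext_iff, ← h1, ← h2, ← hx]
    exact ⟨rfl, rfl⟩
  have hcomp := unifPr_comp g hg
    (fun w => f i (fun k => (w k).val.1) = r ∧ f j (fun k => (w k).val.2) = r)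
  rw [← hcomp]
  have := unifPr_add_le (fun xs : Fin p → Equiv.Perm (Fin n) =>
      Function.Bijective (fun i => f i (fun k => xs k i)))
    (fun a => f i (fun k => (g a k).val.1) = r ∧ f j (fun k => (g a k).val.2) = r)
    (fun a hb hq => hij (hb.injective (hq.1.trans hq.2.symm)))
  linarith
end

section
/- Let m ≥ 3. If the functions (f_{{i,j}})_{i<j}, with f_{{i,j}} : {0,1}^p → {0,1}, constitute a polymorphism of Equiv_m, then there exists an equivalence relation ∼ on [m] such that: (a) if i ≁ j then f_{{i,j}} is the constant 0 function; and (b) for every equivalence class A of ∼ with |A| ≥ 3 there exists a set S ⊆ [p] such that f_{{i,j}}(x) = ⋀_{s ∈ S} x_s for all distinct i, j ∈ A and all x ∈ {0,1}^p. -/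
/-- The index set `E_m` of unordered pairs of distinct elements of `[m]`, encoded as
ordered pairs `(i,j)` with `i < j`. -/
abbrev PairIdx (m : ℕ) := {q : Fin m × Fin m // q.1 < q.2}

/-- Look up the coordinate of `x` at the unordered pair `{i,j}` (junk value `false`
if `i = j`). -/
def pget {m : ℕ} (x : PairIdx m → Bool) (i j : Fin m) : Bool :=
  if h : i < j then x ⟨(i, j), h⟩ else if h' : j < i then x ⟨(j, i), h'⟩ else false

/-- The predicate `Equiv_m`: the vector encodes a relation closed under transitivity. -/
def IsEquivVec {m : ℕ} (x : PairIdx m → Bool) : Prop :=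
  ∀ i j k : Fin m, i ≠ j → j ≠ k → i ≠ k →
    pget x i j = true → pget x j k = true → pget x i k = true

theorem pget_symm' {m : ℕ} (x : PairIdx m → Bool) (i j : Fin m) : pget x i j = pget x j i := by
  unfold pget
  rcases lt_trichotomy i j with h | h | h
  · simp [h, h.le, not_lt.mpr h.le]
  · subst h; rfl
  · simp [h, h.le, not_lt.mpr h.le]

theorem pget_sym_fun {m : ℕ} (g : Fin m → Fin m → Bool) (hg : ∀ u v, g u v = g v u)
    (i j : Fin m) (h : i ≠ j) : pget (fun e => g e.val.1 e.val.2) i j = g i j := by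
  unfold pget
  rcases lt_or_gt_of_ne h with h | h
  · simp [h]
  · simp [h, not_lt.mpr h.le, hg j i]

theorem pget_comp {m p : ℕ} (f : PairIdx m → (Fin p → Bool) → Bool)
    (xs : Fin p → PairIdx m → Bool) (i j : Fin m) (h : i ≠ j) :
    pget (fun e => f e (fun k => xs k e)) i j
      = pget (fun e => f e (fun k => pget (xs k) i j)) i j := by
  unfold pget
  rcases lt_or_gt_of_ne h with h | h
  · simp [h]
  · simp [h, not_lt.mpr h.le]

theorem key {m p : ℕ} (f : PairIdx m → (Fin p → Bool) → Bool)
    (hpoly : ∀ xs : Fin p → PairIdx m → Bool,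
      (∀ k, IsEquivVec (xs k)) → IsEquivVec (fun e => f e (fun k => xs k e)))
    (i j k : Fin m) (hij : i ≠ j) (hjk : j ≠ k) (hik : i ≠ k) (x y z : Fin p → Bool)
    (h1 : ∀ s, x s = true → y s = true → z s = true)
    (h2 : ∀ s, y s = true → z s = true → x s = true)
    (h3 : ∀ s, x s = true → z s = true → y s = true)
    (hx : pget (fun e => f e x) i j = true) (hy : pget (fun e => f e y) j k = true) :
    pget (fun e => f e z) i k = true := by
  let g : Fin p → Fin m → Fin m → Bool := fun s u v => decide
    (((u = i ∧ v = j ∨ u = j ∧ v = i) ∧ x s = true) ∨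
     ((u = j ∧ v = k ∨ u = k ∧ v = j) ∧ y s = true) ∨
     ((u = i ∧ v = k ∨ u = k ∧ v = i) ∧ z s = true))
  have hg : ∀ s u v, g s u v = g s v u := by
    intro s u v
    simp only [g, decide_eq_decide]
    tauto
  have gx : ∀ s, g s i j = x s := by
    intro s
    simp [g, hij, hjk, hik, hij.symm, hjk.symm, hik.symm]
  have gy : ∀ s, g s j k = y s := by
    intro s
    simp [g, hij, hjk, hik, hij.symm, hjk.symm, hik.symm]
  have gz : ∀ s, g s i k = z s := by
    intro s
    simp [g, hij, hjk, hik, hij.symm, hjk.symm, hik.symm]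
  have H := hpoly (fun s e => g s e.val.1 e.val.2) (by
    intro s a b c hab hbc hac
    rw [pget_sym_fun (g s) (hg s) _ _ hab, pget_sym_fun (g s) (hg s) _ _ hbc,
      pget_sym_fun (g s) (hg s) _ _ hac]
    have h1 := h1 s
    have h2 := h2 s
    have h3 := h3 s
    simp only [g, decide_eq_true_eq]
    grind) i j k hij hjk hik
  rw [pget_comp f (fun s e => g s e.val.1 e.val.2) _ _ hij,
    pget_comp f (fun s e => g s e.val.1 e.val.2) _ _ hjk,
    pget_comp f (fun s e => g s e.val.1 e.val.2) _ _ hik] at H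
  simp only [fun s => pget_sym_fun (g s) (hg s) _ _ hij, fun s => pget_sym_fun (g s) (hg s) _ _ hjk,
    fun s => pget_sym_fun (g s) (hg s) _ _ hik, gx, gy, gz] at H
  exact H hx hy

theorem inf_tri {p : ℕ} (A B C : (Fin p → Bool) → Prop)
    (hA : ∃ x, A x) (hB : ∃ x, B x)
    (h1 : ∀ x y, A x → B y → C (x ⊓ y)) (h2 : ∀ x y, A x → C y → B (x ⊓ y))
    (h3 : ∀ x y, B x → C y → A (x ⊓ y)) :
    ∃ S : Fin p → Bool, A S ∧ B S ∧ C S ∧ (∀ x, A x → S ≤ x) ∧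
      (∀ x, B x → S ≤ x) ∧ (∀ x, C x → S ≤ x) := by
  obtain ⟨a, ha⟩ := hA
  obtain ⟨b, hb⟩ := hB
  have c1 := h1 a b ha hb
  have c2 : B (a ⊓ b) := by simpa using h2 _ _ ha c1
  have c3 : A (a ⊓ b) := by simpa using h3 _ _ c2 c1
  obtain ⟨S, hS⟩ := (Set.toFinite {x | A x ∧ B x ∧ C x}).exists_minimal ⟨a ⊓ b, c3, c2, c1⟩
  obtain ⟨⟨sA, sB, sC⟩, hmin⟩ := hS
  have fin : ∀ x, A (x ⊓ S) → B (x ⊓ S) → C (x ⊓ S) → S ≤ x := fun x p q r =>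
    (hmin (show x ⊓ S ∈ {x | A x ∧ B x ∧ C x} from ⟨p, q, r⟩) inf_le_right).trans inf_le_left
  refine ⟨S, sA, sB, sC, fun x hx => ?_, fun x hx => ?_, fun x hx => ?_⟩
  · have b := h2 x S hx sC
    have c := h1 x S hx sB
    have a : A (x ⊓ S) := by simpa using h3 _ _ b c
    exact fin x a b c
  · have a := h3 x S hx sC
    have c : C (x ⊓ S) := by rw [inf_comm]; exact h1 S x sA hx
    have b : B (x ⊓ S) := by simpa using h2 _ _ a c
    exact fin x a b c
  · have a : A (x ⊓ S) := by rw [inf_comm]; exact h3 S x sB hx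
    have b : B (x ⊓ S) := by rw [inf_comm]; exact h2 S x sA hx
    have c : C (x ⊓ S) := by simpa using h1 _ _ a b
    exact fin x a b c

theorem tri {m p : ℕ} (f : PairIdx m → (Fin p → Bool) → Bool)
    (hpoly : ∀ xs : Fin p → PairIdx m → Bool,
      (∀ k, IsEquivVec (xs k)) → IsEquivVec (fun e => f e (fun k => xs k e)))
    (i j k : Fin m) (hij : i ≠ j) (hjk : j ≠ k) (hik : i ≠ k)
    (hx : ∃ x, pget (fun e => f e x) i j = true) (hy : ∃ x, pget (fun e => f e x) i k = true) :
    ∃ S : Fin p → Bool, (∀ x, pget (fun e => f e x) i j = true ↔ S ≤ x) ∧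
      (∀ x, pget (fun e => f e x) i k = true ↔ S ≤ x) ∧
      (∀ x, pget (fun e => f e x) j k = true ↔ S ≤ x) := by
  have K := key f hpoly
  have KI : ∀ i j k : Fin m, i ≠ j → j ≠ k → i ≠ k → ∀ x y,
      pget (fun e => f e x) i j = true → pget (fun e => f e y) j k = true →
      pget (fun e => f e (x ⊓ y)) i k = true := by
    intro i j k hij hjk hik x y
    apply K i j k hij hjk hik <;> intro s <;> simp only [Pi.inf_apply] <;>
      cases x s <;> cases y s <;> simp
  obtain ⟨S, a, b, c, a', b', c'⟩ := inf_tri (fun x => pget (fun e => f e x) i j = true)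
    (fun x => pget (fun e => f e x) i k = true) (fun x => pget (fun e => f e x) j k = true)
    hx hy
    (fun x y p q => KI j i k hij.symm hik hjk x y (by rw [pget_symm']; exact p) q)
    (fun x y p q => KI i j k hij hjk hik x y p q)
    (fun x y p q => KI i k j hik hjk.symm hij x y p (by rw [pget_symm']; exact q))
  have up : ∀ i j k : Fin m, i ≠ j → j ≠ k → i ≠ k →
      pget (fun e => f e S) i j = true → pget (fun e => f e S) j k = true → ∀ z, S ≤ z →
      pget (fun e => f e z) i k = true := by
    intro i j k hij hjk hik p q z hz
    by_contra hcon
    apply hcon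
    refine K i j k hij hjk hik S S z ?_ ?_ ?_ p q
    · intro s h _; exact Bool.le_iff_imp.1 (hz s) h
    · intro s h _; exact h
    · intro s h _; exact h
  refine ⟨S, fun x => ⟨a' x, ?_⟩, fun x => ⟨b' x, ?_⟩, fun x => ⟨c' x, ?_⟩⟩
  · exact up i k j hik hjk.symm hij b (by rw [pget_symm']; exact c) x
  · exact up i j k hij hjk hik a c x
  · exact up j i k hij.symm hik hjk (by rw [pget_symm']; exact a) b x

/-- structure of exact polymorphisms of `Equiv_m`. -/
theorem stmt14 (m p : ℕ) (hm : 3 ≤ m)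
    (f : PairIdx m → (Fin p → Bool) → Bool)
    (hpoly : ∀ xs : Fin p → PairIdx m → Bool,
      (∀ k, IsEquivVec (xs k)) → IsEquivVec (fun e => f e (fun k => xs k e))) :
    ∃ R : Fin m → Fin m → Prop, Equivalence R ∧
      (∀ e : PairIdx m, ¬ R e.val.1 e.val.2 → ∀ x, f e x = false) ∧
      (∀ a : Fin m, 3 ≤ Set.ncard {b | R a b} →
        ∃ S : Finset (Fin p), ∀ e : PairIdx m, R a e.val.1 → R a e.val.2 →
          ∀ x : Fin p → Bool, f e x = decide (∀ s ∈ S, x s = true)) := by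
  have T := tri f hpoly
  have hE : ∀ (e : PairIdx m) x, pget (fun e => f e x) e.val.1 e.val.2 = f e x := by
    intro e x
    have := e.2
    simp [pget, this]
  have SY : ∀ x i j, pget (fun e => f e x) i j = pget (fun e => f e x) j i :=
    fun x => pget_symm' _
  refine ⟨fun i j => i = j ∨ ∃ x, pget (fun e => f e x) i j = true, ⟨fun _ => Or.inl rfl, ?_, ?_⟩,
    ?_, ?_⟩
  · rintro i j (h | ⟨x, h⟩)
    · exact Or.inl h.symm
    · exact Or.inr ⟨x, by rw [SY]; exact h⟩
  · rintro i j k (h | ⟨x, h⟩) (h' | ⟨y, h'⟩)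
    · exact Or.inl (h.trans h')
    · subst h; exact Or.inr ⟨y, h'⟩
    · subst h'; exact Or.inr ⟨x, h⟩
    · by_cases hik : i = k
      · exact Or.inl hik
      by_cases hij : i = j
      · subst hij; exact Or.inr ⟨y, h'⟩
      by_cases hjk : j = k
      · subst hjk; exact Or.inr ⟨x, h⟩
      obtain ⟨S, -, -, h3⟩ := T j i k (Ne.symm hij) hik hjk ⟨x, by rw [SY]; exact h⟩ ⟨y, h'⟩
      exact Or.inr ⟨S, (h3 S).2 le_rfl⟩
  · intro e he x
    rw [← hE e x]
    by_contra h
    exact he (Or.inr ⟨x, by simpa using h⟩)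
  · intro a ha
    have hex : ∃ b c, b ≠ a ∧ c ≠ a ∧ b ≠ c ∧ (∃ x, pget (fun e => f e x) a b = true) ∧
        (∃ x, pget (fun e => f e x) a c = true) := by
      have h2 : 2 < Set.ncard {b | a = b ∨ ∃ x, pget (fun e => f e x) a b = true} := ha
      rw [Set.two_lt_ncard (Set.toFinite _)] at h2
      obtain ⟨u, hu, v, hv, w, hw, huv, huw, hvw⟩ := h2
      simp only [Set.mem_setOf_eq] at hu hv hw
      rcases hu with rfl | hu
      · exact ⟨v, w, huv.symm, huw.symm, hvw, hv.resolve_left huv, hw.resolve_left huw⟩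
      rcases hv with rfl | hv
      · exact ⟨u, w, huv, hvw.symm, huw, hu, hw.resolve_left hvw⟩
      by_cases hau : a = u
      · subst hau
        exact ⟨v, w, huv.symm, huw.symm, hvw, hv, hw.resolve_left huw⟩
      by_cases hav : a = v
      · subst hav
        exact ⟨u, w, huv, hvw.symm, huw, hu, hw.resolve_left hvw⟩
      exact ⟨u, v, Ne.symm hau, Ne.symm hav, huv, hu, hv⟩
    obtain ⟨b, c, hb, hc, hbc, eb, ec⟩ := hex
    obtain ⟨S, s1, s2, s3⟩ := T a b c hb.symm hbc hc.symm eb ec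
    have hd : ∀ d, a ≠ d → (∃ x, pget (fun e => f e x) a d = true) →
        ∀ x, pget (fun e => f e x) a d = true ↔ S ≤ x := by
      intro d hd ed x
      by_cases hbd : b = d
      · subst hbd; exact s1 x
      obtain ⟨S', t1, t2, -⟩ := T a b d hb.symm hbd hd eb ed
      rw [t2, ← t1, s1]
    refine ⟨Finset.univ.filter (fun s => S s = true), fun e h1 h2 x => ?_⟩
    have main : pget (fun e => f e x) e.val.1 e.val.2 = true ↔ S ≤ x := by
      rcases e with ⟨⟨i, j⟩, hij⟩
      simp only at h1 h2 hij ⊢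
      by_cases hai : a = i
      · subst hai
        exact hd j hij.ne (h2.resolve_left hij.ne) x
      by_cases haj : a = j
      · subst haj
        rw [SY]
        exact hd i hai (h1.resolve_left hai) x
      obtain ⟨S', t1, t2, t3⟩ := T a i j hai hij.ne haj (h1.resolve_left hai) (h2.resolve_left haj)
      rw [t3, ← t1, hd i hai (h1.resolve_left hai)]
    rw [hE] at main
    rw [Bool.eq_iff_iff, main, decide_eq_true_eq]
    simp only [Finset.mem_filter, Finset.mem_univ, true_and, Pi.le_def, Bool.le_iff_imp]
end

section
/- Let m ≥ 3, let ∼ be any equivalence relation on [m], and let (f_{{i,j}})_{i<j}, with f_{{i,j}} : {0,1}^p → {0,1}, be functions satisfying: (a) if i ≁ j then f_{{i,j}} is the constant 0 function; and (b) for every equivalence class A of ∼ with |A| ≥ 3 there exists a set S_A ⊆ [p] such that f_{{i,j}}(x) = ⋀_{s ∈ S_A} x_s for all distinct i, j ∈ A and all x ∈ {0,1}^p (the functions f_{{i,j}} for classes {i,j} of size 2 being arbitrary). Then (f_{{i,j}})_{i<j} constitute a polymorphism of Equiv_m. -/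
theorem pget_idx {m : ℕ} (i j : Fin m) (hij : i ≠ j) :
    ∃ e : PairIdx m, ((e.val.1 = i ∧ e.val.2 = j) ∨ (e.val.1 = j ∧ e.val.2 = i)) ∧
      ∀ x : PairIdx m → Bool, pget x i j = x e := by
  rcases lt_or_gt_of_ne hij with h | h
  · exact ⟨⟨(i, j), h⟩, Or.inl ⟨rfl, rfl⟩, fun x => by simp [pget, h]⟩
  · exact ⟨⟨(j, i), h⟩, Or.inr ⟨rfl, rfl⟩, fun x => by simp [pget, h, not_lt_of_gt h]⟩

/-- conversely, every family of the form described in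
Theorem `thm:equiv-polymorphisms` is a polymorphism of `Equiv_m`. -/
theorem stmt15 (m p : ℕ) (hm : 3 ≤ m)
    (f : PairIdx m → (Fin p → Bool) → Bool)
    (R : Fin m → Fin m → Prop) (hR : Equivalence R)
    (ha : ∀ e : PairIdx m, ¬ R e.val.1 e.val.2 → ∀ x, f e x = false)
    (hb : ∀ a : Fin m, 3 ≤ Set.ncard {b | R a b} →
      ∃ S : Finset (Fin p), ∀ e : PairIdx m, R a e.val.1 → R a e.val.2 →
        ∀ x : Fin p → Bool, f e x = decide (∀ s ∈ S, x s = true)) :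
    ∀ xs : Fin p → PairIdx m → Bool,
      (∀ k, IsEquivVec (xs k)) → IsEquivVec (fun e => f e (fun k => xs k e)) := by
  intro xs hxs i j k hij hjk hik h1 h2
  obtain ⟨e1, he1, g1⟩ := pget_idx i j hij
  obtain ⟨e2, he2, g2⟩ := pget_idx j k hjk
  obtain ⟨e3, he3, g3⟩ := pget_idx i k hik
  rw [g1] at h1
  rw [g2] at h2
  rw [g3]
  have r1 : R i j := by
    by_contra hn
    have : f e1 (fun k => xs k e1) = false := by
      apply ha
      rcases he1 with ⟨a, b⟩ | ⟨a, b⟩ <;> rw [a, b]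
      · exact hn
      · exact fun h => hn (hR.symm h)
    simp [this] at h1
  have r2 : R j k := by
    by_contra hn
    have : f e2 (fun k => xs k e2) = false := by
      apply ha
      rcases he2 with ⟨a, b⟩ | ⟨a, b⟩ <;> rw [a, b]
      · exact hn
      · exact fun h => hn (hR.symm h)
    simp [this] at h2
  have r3 : R i k := hR.trans r1 r2
  have r0 : R i i := hR.refl i
  have hc : 3 ≤ Set.ncard {b | R i b} := by
    have h3 : Set.ncard ({i, j, k} : Set (Fin m)) = 3 :=
      Set.ncard_eq_three.mpr ⟨i, j, k, hij, hik, hjk, rfl⟩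
    rw [← h3]
    apply Set.ncard_le_ncard _ (Set.toFinite _)
    rintro b (rfl | rfl | rfl) <;> assumption
  obtain ⟨S, hS⟩ := hb i hc
  have k1 := hS e1 (by rcases he1 with ⟨a, b⟩ | ⟨a, b⟩ <;> rw [a] <;> assumption)
    (by rcases he1 with ⟨a, b⟩ | ⟨a, b⟩ <;> rw [b] <;> assumption)
  have k2 := hS e2 (by rcases he2 with ⟨a, b⟩ | ⟨a, b⟩ <;> rw [a] <;> assumption)
    (by rcases he2 with ⟨a, b⟩ | ⟨a, b⟩ <;> rw [b] <;> assumption)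
  have k3 := hS e3 (by rcases he3 with ⟨a, b⟩ | ⟨a, b⟩ <;> rw [a] <;> assumption)
    (by rcases he3 with ⟨a, b⟩ | ⟨a, b⟩ <;> rw [b] <;> assumption)
  simp only [k1, k2, k3, decide_eq_true_eq] at h1 h2 ⊢
  intro s hs
  have := hxs s i j k hij hjk hik
  rw [g1, g2, g3] at this
  exact this (h1 s hs) (h2 s hs)
end

section
/- If f_{{1,2}}, f_{{1,3}}, f_{{2,3}} : {0,1}^p → {0,1} constitute a polymorphism of Equiv_3, then either there exists a set S ⊆ [p] such that f_{{1,2}}(x) = f_{{1,3}}(x) = f_{{2,3}}(x) = ⋀_{s ∈ S} x_s for all x ∈ {0,1}^p, or at least two of the three functions f_{{1,2}}, f_{{1,3}}, f_{{2,3}} are the constant 0 function. -/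
/-- The predicate `Equiv_3 ⊆ {0,1}³`, with coordinates indexed by the pairs
`{1,2}, {1,3}, {2,3}`: transitivity in every order (equivalently, the Hamming
weight is not exactly two). -/
def IsEquiv3 (a b c : Bool) : Prop :=
  (a = true → b = true → c = true) ∧
  (a = true → c = true → b = true) ∧
  (b = true → c = true → a = true)

theorem aux16 (p : ℕ) (f g h : (Fin p → Bool) → Bool)
    (hp : ∀ x y z : Fin p → Bool,
      (∀ k, IsEquiv3 (x k) (y k) (z k)) → IsEquiv3 (f x) (g y) (h z))
    (hf : ∃ a, f a = true) (hg : ∃ b, g b = true) :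
    ∃ S : Finset (Fin p), ∀ x : Fin p → Bool,
      f x = decide (∀ s ∈ S, x s = true) ∧
      g x = decide (∀ s ∈ S, x s = true) ∧
      h x = decide (∀ s ∈ S, x s = true) := by
  have e1 : ∀ a b : Bool, IsEquiv3 a b (a && b) := by unfold IsEquiv3; decide
  have e2 : ∀ a b : Bool, IsEquiv3 a (a && b) (a && b) := by unfold IsEquiv3; decide
  have e3 : ∀ a b : Bool, IsEquiv3 (a && b) b (a && b) := by unfold IsEquiv3; decide
  have e4 : ∀ a b c : Bool, IsEquiv3 a b c → IsEquiv3 a c b := by unfold IsEquiv3; decide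
  have e5 : ∀ a b c : Bool, IsEquiv3 a b c → IsEquiv3 c b a := by unfold IsEquiv3; decide
  have d1 : ∀ x y z : Fin p → Bool, (∀ k, IsEquiv3 (x k) (y k) (z k)) →
      f x = true → g y = true → h z = true := fun x y z H => (hp x y z H).1
  have d2 : ∀ x y z : Fin p → Bool, (∀ k, IsEquiv3 (x k) (y k) (z k)) →
      f x = true → h z = true → g y = true := fun x y z H => (hp x y z H).2.1
  have d3 : ∀ x y z : Fin p → Bool, (∀ k, IsEquiv3 (x k) (y k) (z k)) →
      g y = true → h z = true → f x = true := fun x y z H => (hp x y z H).2.2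
  -- meets lie in all three
  have m : ∀ x y : Fin p → Bool, f x = true → g y = true →
      f (fun k => x k && y k) = true ∧ g (fun k => x k && y k) = true ∧
      h (fun k => x k && y k) = true := by
    intro x y hx hy
    have h1 := d1 x y (fun k => x k && y k) (fun k => e1 _ _) hx hy
    exact ⟨d3 _ y _ (fun k => e3 _ _) hy h1, d2 x _ _ (fun k => e2 _ _) hx h1, h1⟩
  have up : ∀ x y : Fin p → Bool, (∀ k, x k = true → y k = true) →
      f x = true → g x = true → h x = true → f y = true ∧ g y = true ∧ h y = true := by
    intro x y hxy h1 h2 h3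
    refine ⟨d3 y x x ?_ h2 h3, d2 x y x ?_ h1 h3, d1 x x y ?_ h1 h2⟩ <;>
    · intro k
      have := hxy k
      unfold IsEquiv3
      tauto
  obtain ⟨a, ha⟩ := hf
  obtain ⟨b, hb⟩ := hg
  have ff : ∀ x, f x = true → f x = true ∧ g x = true ∧ h x = true := by
    intro x hx
    obtain ⟨h1, h2, h3⟩ := m x b hx hb
    exact up _ x (by intro k; simp; tauto) h1 h2 h3
  have gg : ∀ x, g x = true → f x = true ∧ g x = true ∧ h x = true := by
    intro x hx
    obtain ⟨h1, h2, h3⟩ := m a x ha hx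
    exact up _ x (by intro k; simp) h1 h2 h3
  have hh : ∀ x, h x = true → f x = true ∧ g x = true ∧ h x = true := by
    intro x hx
    have h2 := d2 a (fun k => a k && x k) x (fun k => e4 _ _ _ (e1 _ _)) ha hx
    obtain ⟨h1, h2, h3⟩ := gg _ h2
    exact up _ x (by intro k; simp) h1 h2 h3
  obtain ⟨w, hw⟩ := (Set.toFinite {x | f x = true}).exists_minimal ⟨a, ha⟩
  have hwf : f w = true := hw.1
  have key : ∀ x, f x = true ↔ ∀ s ∈ Finset.univ.filter (fun s => w s = true), x s = true := by
    intro x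
    constructor
    · intro hx s hs
      have hs : w s = true := by simpa using hs
      have h1 := (m w x hwf (ff x hx).2.1).1
      have h2 : w s ≤ (w s && x s) := hw.2 (show (fun k => w k && x k) ∈ {x | f x = true} from h1)
        (fun k => Bool.and_le_left (w k) (x k)) s
      cases hxs : x s
      · rw [hs, hxs] at h2
        exact absurd h2 (by decide)
      · rfl
    · intro H
      exact (up w x (fun k hk => H k (by simpa using hk)) hwf (ff w hwf).2.1 (ff w hwf).2.2).1
  refine ⟨Finset.univ.filter (fun s => w s = true), fun x => ?_⟩
  have kx := key x
  refine ⟨?_, ?_, ?_⟩ <;> rw [Bool.eq_iff_iff, decide_eq_true_iff, ← kx]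
  · exact ⟨fun q => (gg x q).1, fun q => (ff x q).2.1⟩
  · exact ⟨fun q => (hh x q).1, fun q => (ff x q).2.2⟩

/-- every polymorphism of `Equiv_3` is either a common AND over a set of
coordinates, or has at least two of its three component functions constant `0`. -/
theorem stmt16 (p : ℕ)
    (f12 f13 f23 : (Fin p → Bool) → Bool)
    (hpoly : ∀ x y z : Fin p → Bool,
      (∀ k, IsEquiv3 (x k) (y k) (z k)) → IsEquiv3 (f12 x) (f13 y) (f23 z)) :
    (∃ S : Finset (Fin p), ∀ x : Fin p → Bool,
      f12 x = decide (∀ s ∈ S, x s = true) ∧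
      f13 x = decide (∀ s ∈ S, x s = true) ∧
      f23 x = decide (∀ s ∈ S, x s = true)) ∨
    ((∀ x, f12 x = false) ∧ (∀ x, f13 x = false)) ∨
    ((∀ x, f12 x = false) ∧ (∀ x, f23 x = false)) ∨
    ((∀ x, f13 x = false) ∧ (∀ x, f23 x = false)) := by
  by_cases h1 : ∃ a, f12 a = true
  · by_cases h2 : ∃ a, f13 a = true
    · exact Or.inl (aux16 p f12 f13 f23 hpoly h1 h2)
    · by_cases h3 : ∃ a, f23 a = true
      · left
        obtain ⟨S, hS⟩ := aux16 p f12 f23 f13 (fun x y z H => by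
          have := hpoly x z y (fun k => by have := H k; unfold IsEquiv3 at *; tauto)
          unfold IsEquiv3 at *; tauto) h1 h3
        exact ⟨S, fun x => ⟨(hS x).1, (hS x).2.2, (hS x).2.1⟩⟩
      · right; right; right
        simp only [not_exists, Bool.not_eq_true] at h2 h3
        exact ⟨h2, h3⟩
  · by_cases h2 : ∃ a, f13 a = true
    · by_cases h3 : ∃ a, f23 a = true
      · left
        obtain ⟨S, hS⟩ := aux16 p f13 f23 f12 (fun x y z H => by
          have := hpoly z x y (fun k => by have := H k; unfold IsEquiv3 at *; tauto)
          unfold IsEquiv3 at *; tauto) h2 h3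
        exact ⟨S, fun x => ⟨(hS x).2.2, (hS x).1, (hS x).2.1⟩⟩
      · right; right; left
        simp only [not_exists, Bool.not_eq_true] at h1 h3
        exact ⟨h1, h3⟩
    · right; left
      simp only [not_exists, Bool.not_eq_true] at h1 h2
      exact ⟨h1, h2⟩
end
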